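/- arXiv:2508.01243 — 4 statements merged into one kernel-verified Lean document; each statement's English description precedes it below -/
import Mathlib

section
/- For all ν, μ1, μ2 ∈ P_2(ℝ^d), the infimum defining the ν-based Wasserstein discrepancy is attained: there exists ρ* ∈ Γ(ν, μ1, μ2) such that ∫ ‖x1−x2‖² dρ*(y,x1,x2) = inf_{ρ ∈ Γ(ν,μ1,μ2)} ∫ ‖x1−x2‖² dρ(y,x1,x2). -/
open MeasureTheory Filter Topology ProbabilityTheory
open scoped ENNReal RealInnerProductSpace Classical

noncomputable section

/-- Euclidean space ℝ^d. -/
abbrev Euc (d : ℕ) : Type := EuclideanSpace ℝ (Fin d)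

/-- `P2` : Borel probability measures with finite second moment. -/
def P2 {E : Type*} [NormedAddCommGroup E] [MeasurableSpace E] : Set (Measure E) :=
  {μ | IsProbabilityMeasure μ ∧ Integrable (fun x => ‖x‖ ^ 2) μ}

/-- Couplings between two measures. -/
def Coupling {E F : Type*} [MeasurableSpace E] [MeasurableSpace F]
    (μ : Measure E) (ν : Measure F) : Set (Measure (E × F)) :=
  {π | IsProbabilityMeasure π ∧ π.map Prod.fst = μ ∧ π.map Prod.snd = ν}

/-- Quadratic transport cost of a plan. -/
def tCost {E : Type*} [NormedAddCommGroup E] [MeasurableSpace E]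
    (π : Measure (E × E)) : ℝ :=
  ∫ p, ‖p.1 - p.2‖ ^ 2 ∂π

/-- Squared 2-Wasserstein distance. -/
def W2sq {E : Type*} [NormedAddCommGroup E] [MeasurableSpace E] (μ ν : Measure E) : ℝ :=
  sInf (tCost '' Coupling μ ν)

/-- 2-Wasserstein distance. -/
def W2 {E : Type*} [NormedAddCommGroup E] [MeasurableSpace E] (μ ν : Measure E) : ℝ :=
  Real.sqrt (W2sq μ ν)

/-- Optimal transport plans for the quadratic cost. -/
def OptPlan {E : Type*} [NormedAddCommGroup E] [MeasurableSpace E]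
    (μ ν : Measure E) : Set (Measure (E × E)) :=
  {π | π ∈ Coupling μ ν ∧ tCost π = W2sq μ ν}

/-- `Gamma ν μ1 μ2` : probability measures on `E × E × E` whose (1,2)-marginal is an optimal
plan between `ν` and `μ1` and whose (1,3)-marginal is an optimal plan between `ν` and `μ2`. -/
def Gamma {E : Type*} [NormedAddCommGroup E] [MeasurableSpace E]
    (ν μ1 μ2 : Measure E) : Set (Measure (E × E × E)) :=
  {ρ | IsProbabilityMeasure ρ ∧
    ρ.map (fun p => (p.1, p.2.1)) ∈ OptPlan ν μ1 ∧
    ρ.map (fun p => (p.1, p.2.2)) ∈ OptPlan ν μ2}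

/-- Cost `∫ ‖x1 − x2‖² dρ(y, x1, x2)` of a 3-plan. -/
def pivotCost {E : Type*} [NormedAddCommGroup E] [MeasurableSpace E]
    (ρ : Measure (E × E × E)) : ℝ :=
  ∫ p, ‖p.2.1 - p.2.2‖ ^ 2 ∂ρ

/-- Squared ν-based Wasserstein discrepancy. -/
def Wnusq {E : Type*} [NormedAddCommGroup E] [MeasurableSpace E]
    (ν μ1 μ2 : Measure E) : ℝ :=
  sInf (pivotCost '' Gamma ν μ1 μ2)

/-- ν-based Wasserstein discrepancy. -/
def Wnu {E : Type*} [NormedAddCommGroup E] [MeasurableSpace E]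
    (ν μ1 μ2 : Measure E) : ℝ :=
  Real.sqrt (Wnusq ν μ1 μ2)

/-- Weak convergence of a sequence of measures (against bounded continuous functions). -/
def WeakConv {E : Type*} [MeasurableSpace E] [TopologicalSpace E]
    (μs : ℕ → Measure E) (μ : Measure E) : Prop :=
  ∀ f : BoundedContinuousFunction E ℝ,
    Tendsto (fun n => ∫ x, f x ∂(μs n)) atTop (𝓝 (∫ x, f x ∂μ))

/-- Quantile function (pseudo-inverse c.d.f.) of a measure on ℝ. -/
def quantile (ν : Measure ℝ) (t : ℝ) : ℝ :=
  sInf {s : ℝ | ENNReal.ofReal t ≤ ν (Set.Iic s)}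

/-- Pushforward of `μ` by the projection `P_θ : x ↦ ⟪θ, x⟫`. -/
def projLine {d : ℕ} (θ : Euc d) (μ : Measure (Euc d)) : Measure ℝ :=
  μ.map (fun x => ⟪θ, x⟫)

/-- `μ_θ[μ1, μ2]` : the (unique) Wasserstein mean of `Q_θ#μ1` and `Q_θ#μ2`, given by the
explicit quantile formula `[(½ F_{ν1}^{[-1]} + ½ F_{ν2}^{[-1]})·θ]#L_{[0,1]}`. -/
def pivotMiddle {d : ℕ} (θ : Euc d) (μ1 μ2 : Measure (Euc d)) : Measure (Euc d) :=
  (volume.restrict (Set.Icc (0 : ℝ) 1)).map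
    (fun t => ((1 / 2) * quantile (projLine θ μ1) t
      + (1 / 2) * quantile (projLine θ μ2) t) • θ)

/-- Squared Pivot Sliced discrepancy. -/
def PSsq {d : ℕ} (θ : Euc d) (μ1 μ2 : Measure (Euc d)) : ℝ :=
  Wnusq (pivotMiddle θ μ1 μ2) μ1 μ2

/-- Pivot Sliced discrepancy. -/
def PS {d : ℕ} (θ : Euc d) (μ1 μ2 : Measure (Euc d)) : ℝ :=
  Real.sqrt (PSsq θ μ1 μ2)

/-- `π_θ[μ1, μ2]` : the unique optimal 1D plan between `P_θ#μ1` and `P_θ#μ2`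
(co-monotone quantile coupling). -/
def piTheta {d : ℕ} (θ : Euc d) (μ1 μ2 : Measure (Euc d)) : Measure (ℝ × ℝ) :=
  (volume.restrict (Set.Icc (0 : ℝ) 1)).map
    (fun t => (quantile (projLine θ μ1) t, quantile (projLine θ μ2) t))

/-- `Ω_θ(μ1, μ2)` : couplings of `μ1, μ2` whose projection by `(P_θ, P_θ)` is `π_θ[μ1, μ2]`. -/
def OmegaTheta {d : ℕ} (θ : Euc d) (μ1 μ2 : Measure (Euc d)) :
    Set (Measure (Euc d × Euc d)) :=
  {ω | ω ∈ Coupling μ1 μ2 ∧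
    ω.map (fun p => (⟪θ, p.1⟫, ⟪θ, p.2⟫)) = piTheta θ μ1 μ2}

/-- Squared constrained Wasserstein discrepancy `CW_θ²`. -/
def CWsq {d : ℕ} (θ : Euc d) (μ1 μ2 : Measure (Euc d)) : ℝ :=
  sInf (tCost '' OmegaTheta θ μ1 μ2)

/-- Wasserstein means: minimisers of `μ ↦ W₂²(μ1, μ) + W₂²(μ, μ2)` over `P2`. -/
def WMean {d : ℕ} (μ1 μ2 : Measure (Euc d)) : Set (Measure (Euc d)) :=
  {μ | μ ∈ (P2 : Set (Measure (Euc d))) ∧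
    ∀ μ' ∈ (P2 : Set (Measure (Euc d))),
      W2sq μ1 μ + W2sq μ μ2 ≤ W2sq μ1 μ' + W2sq μ' μ2}

/-- Uniform empirical measure `1/n ∑ δ_{x_i}`. -/
def empMeasure {d n : ℕ} (x : Fin n → Euc d) : Measure (Euc d) :=
  (n : ℝ≥0∞)⁻¹ • ∑ i, Measure.dirac (x i)

/-- transport cost as an extended nonnegative number -/
def lcost {d : ℕ} (π : Measure (Euc d × Euc d)) : ℝ≥0∞ :=
  ∫⁻ p, ENNReal.ofReal (‖p.1 - p.2‖ ^ 2) ∂π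

lemma tCost_eq_lcost {d : ℕ} (π : Measure (Euc d × Euc d)) : tCost π = (lcost π).toReal := by
  unfold tCost lcost
  refine integral_eq_lintegral_of_nonneg_ae (Eventually.of_forall fun p => by positivity) ?_
  exact (by fun_prop : Continuous fun p : Euc d × Euc d => ‖p.1 - p.2‖ ^ 2).aestronglyMeasurable

lemma lcost_ne_top {d : ℕ} {μ ν : Measure (Euc d)}
    (hμ : μ ∈ (P2 : Set (Measure (Euc d)))) (hν : ν ∈ (P2 : Set (Measure (Euc d))))
    {π : Measure (Euc d × Euc d)} (hπ : π ∈ Coupling μ ν) : lcost π ≠ ⊤ := by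
  obtain ⟨_, h1, h2⟩ := hπ
  have i1 : Integrable (fun p : Euc d × Euc d => ‖p.1‖ ^ 2) π := by
    have := hμ.2
    rw [← h1] at this
    exact this.comp_measurable measurable_fst
  have i2 : Integrable (fun p : Euc d × Euc d => ‖p.2‖ ^ 2) π := by
    have := hν.2
    rw [← h2] at this
    exact this.comp_measurable measurable_snd
  have i3 : Integrable (fun p : Euc d × Euc d => ‖p.1 - p.2‖ ^ 2) π := by
    refine ((i1.const_mul 2).add (i2.const_mul 2)).mono'
      (by fun_prop : Continuous fun p : Euc d × Euc d => ‖p.1 - p.2‖ ^ 2).aestronglyMeasurable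
      (Eventually.of_forall fun p => ?_)
    have := norm_sub_le p.1 p.2
    have h0 := norm_nonneg (p.1 - p.2)
    simp only [norm_pow, norm_norm, Pi.add_apply]
    nlinarith [sq_nonneg (‖p.1‖ - ‖p.2‖)]
  exact i3.lintegral_lt_top.ne

lemma lsc_lintegral {X : Type*} [TopologicalSpace X] [MeasurableSpace X] [OpensMeasurableSpace X]
    {f : X → ℝ} (hf : Continuous f) :
    LowerSemicontinuous
      (fun μ : ProbabilityMeasure X => ∫⁻ x, ENNReal.ofReal (f x) ∂(μ : Measure X)) := by
  have key : ∀ μ : ProbabilityMeasure X, ∫⁻ x, ENNReal.ofReal (f x) ∂(μ : Measure X) =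
      ⨆ n : ℕ, ∫⁻ x, ((min (f x).toNNReal (n : NNReal) : NNReal) : ℝ≥0∞) ∂(μ : Measure X) := by
    intro μ
    rw [← lintegral_iSup]
    · congr 1
      ext x
      apply le_antisymm
      · obtain ⟨n, hn⟩ := exists_nat_ge (f x).toNNReal
        refine le_iSup_of_le n ?_
        rw [min_eq_left hn]; rfl
      · refine iSup_le fun n => ?_
        exact ENNReal.coe_le_coe.2 (min_le_left _ _)
    · intro n
      exact (by fun_prop : Continuous fun x =>
        ((min (f x).toNNReal (n : NNReal) : NNReal) : ℝ≥0∞)).measurable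
    · intro n m hnm x
      simp only
      gcongr
  simp_rw [key]
  refine lowerSemicontinuous_iSup fun n => Continuous.lowerSemicontinuous ?_
  have hc : Continuous fun x => min (f x).toNNReal (n : NNReal) := by fun_prop
  let g : BoundedContinuousFunction X NNReal :=
    BoundedContinuousFunction.mkOfBound ⟨_, hc⟩ n (by
      intro x y
      simp only [ContinuousMap.coe_mk, NNReal.dist_eq]
      have a1 : ((min (f x).toNNReal (n : NNReal) : NNReal) : ℝ) ≤ n := by
        exact_mod_cast min_le_right _ _
      have a2 : ((min (f y).toNNReal (n : NNReal) : NNReal) : ℝ) ≤ n := by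
        exact_mod_cast min_le_right _ _
      have b1 := (min (f x).toNNReal (n : NNReal)).coe_nonneg
      have b2 := (min (f y).toNNReal (n : NNReal)).coe_nonneg
      rw [abs_le]; constructor <;> linarith)
  have := ProbabilityMeasure.continuous_iff_forall_continuous_lintegral.1
    (continuous_id (X := ProbabilityMeasure X)) g
  exact this

/-- couplings as probability measures -/
def CP {d : ℕ} (μ ν : Measure (Euc d)) : Set (ProbabilityMeasure (Euc d × Euc d)) :=
  {π | (π : Measure (Euc d × Euc d)) ∈ Coupling μ ν}

lemma isClosed_map_eq {X Y : Type*} [TopologicalSpace X] [MeasurableSpace X]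
    [OpensMeasurableSpace X] [TopologicalSpace Y] [MeasurableSpace Y] [BorelSpace Y]
    [HasOuterApproxClosed Y] {f : X → Y} (hf : Continuous f) (μ : Measure Y)
    [IsProbabilityMeasure μ] :
    IsClosed {π : ProbabilityMeasure X | (π : Measure X).map f = μ} := by
  let m : ProbabilityMeasure Y := ⟨μ, inferInstance⟩
  have h : IsClosed {π : ProbabilityMeasure X | π.map hf.measurable.aemeasurable = m} :=
    isClosed_eq (ProbabilityMeasure.continuous_map hf) continuous_const
  convert h using 1
  ext π
  simp only [Set.mem_ofPred_eq]
  exact (Subtype.ext_iff (a1 := π.map hf.measurable.aemeasurable) (a2 := m)).symm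

lemma isClosed_CP {d : ℕ} (μ ν : Measure (Euc d)) [IsProbabilityMeasure μ]
    [IsProbabilityMeasure ν] : IsClosed (CP μ ν) := by
  have := (isClosed_map_eq (X := Euc d × Euc d) continuous_fst μ).inter
    (isClosed_map_eq (X := Euc d × Euc d) continuous_snd ν)
  convert this using 1
  ext π
  simp only [CP, Coupling, Set.mem_ofPred_eq, Set.mem_inter_iff]
  exact ⟨fun h => h.2, fun h => ⟨inferInstance, h⟩⟩

lemma tight_map {X Y : Type*} [MeasurableSpace X] [TopologicalSpace Y] [MeasurableSpace Y]
    [TopologicalSpace.IsCompletelyPseudoMetrizableSpace Y] [SecondCountableTopology Y]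
    [BorelSpace Y] (μ : Measure Y) [IsProbabilityMeasure μ] (f : X → Y) (S : Set (Measure X))
    (h : ∀ π ∈ S, π.map f = μ) : IsTightMeasureSet (Measure.map f '' S) := by
  refine (isTightMeasureSet_singleton (μ := μ)).subset ?_
  rintro _ ⟨π, hπ, rfl⟩
  exact h π hπ

lemma isCompact_CP {d : ℕ} (μ ν : Measure (Euc d)) [IsProbabilityMeasure μ]
    [IsProbabilityMeasure ν] : IsCompact (CP μ ν) := by
  rw [← (isClosed_CP μ ν).closure_eq]
  apply isCompact_closure_of_isTightMeasureSet
  apply IsTightMeasureSet.prodMk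
  · apply tight_map μ
    rintro _ ⟨π, hπ, rfl⟩
    exact hπ.2.1
  · apply tight_map ν
    rintro _ ⟨π, hπ, rfl⟩
    exact hπ.2.2

lemma lsc_lcost {d : ℕ} : LowerSemicontinuous
    (fun π : ProbabilityMeasure (Euc d × Euc d) => lcost (π : Measure (Euc d × Euc d))) :=
  lsc_lintegral (by fun_prop)

/-- description of optimal plans as a closed nonempty sublevel set -/
lemma optPlan_desc {d : ℕ} {μ ν : Measure (Euc d)}
    (hμ : μ ∈ (P2 : Set (Measure (Euc d)))) (hν : ν ∈ (P2 : Set (Measure (Euc d)))) :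
    (OptPlan μ ν).Nonempty ∧
      IsClosed {π : ProbabilityMeasure (Euc d × Euc d) |
        (π : Measure (Euc d × Euc d)) ∈ OptPlan μ ν} := by
  have := hμ.1
  have := hν.1
  have ne : (CP μ ν).Nonempty :=
    ⟨⟨μ.prod ν, inferInstance⟩, (⟨inferInstance, Measure.fst_prod, Measure.snd_prod⟩ : μ.prod ν ∈ Coupling μ ν)⟩
  obtain ⟨π₀, h0, hmin⟩ := LowerSemicontinuousOn.exists_isMinOn ne (isCompact_CP μ ν)
    (lsc_lcost.lowerSemicontinuousOn _)
  have hle : ∀ π ∈ Coupling μ ν, lcost (π₀ : Measure (Euc d × Euc d)) ≤ lcost π :=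
    fun π hπ => hmin (show (⟨π, hπ.1⟩ : ProbabilityMeasure _) ∈ CP μ ν from hπ)
  have hW : W2sq μ ν = tCost (π₀ : Measure (Euc d × Euc d)) := by
    refine IsLeast.csInf_eq ⟨⟨_, h0, rfl⟩, ?_⟩
    rintro _ ⟨π, hπ, rfl⟩
    rw [tCost_eq_lcost, tCost_eq_lcost]
    exact ENNReal.toReal_mono (lcost_ne_top hμ hν hπ) (hle π hπ)
  refine ⟨⟨_, h0, hW.symm⟩, ?_⟩
  convert (isClosed_CP μ ν).inter
    (lsc_lcost.isClosed_preimage (lcost (π₀ : Measure (Euc d × Euc d)))) using 1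
  ext π
  simp only [OptPlan, CP, Set.mem_ofPred_eq, Set.mem_inter_iff, Set.mem_preimage, Set.mem_Iic]
  refine and_congr_right fun hπ => ?_
  rw [hW, tCost_eq_lcost, tCost_eq_lcost, ENNReal.toReal_eq_toReal_iff'
    (lcost_ne_top hμ hν hπ) (lcost_ne_top hμ hν h0)]
  exact ⟨fun h => h.le, fun h => le_antisymm h (hle _ hπ)⟩

lemma gluing {d : ℕ} {ν μ1 μ2 : Measure (Euc d)} {π1 π2 : Measure (Euc d × Euc d)}
    (h1 : π1 ∈ Coupling ν μ1) (h2 : π2 ∈ Coupling ν μ2) :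
    ∃ ρ : Measure (Euc d × Euc d × Euc d), IsProbabilityMeasure ρ ∧
      ρ.map (fun p => (p.1, p.2.1)) = π1 ∧ ρ.map (fun p => (p.1, p.2.2)) = π2 := by
  have := h1.1
  have := h2.1
  have f1 : π1.fst = ν := h1.2.1
  have f2 : π2.fst = ν := h2.2.1
  have : IsProbabilityMeasure ν := by rw [← f1]; infer_instance
  refine ⟨ν ⊗ₘ (π1.condKernel ×ₖ π2.condKernel), inferInstance, ?_, ?_⟩
  · conv_rhs => rw [← π1.disintegrate π1.condKernel, f1]
    have := Measure.compProd_map (μ := ν) (κ := π1.condKernel ×ₖ π2.condKernel)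
      (measurable_fst : Measurable (Prod.fst : Euc d × Euc d → Euc d))
    rw [← Kernel.fst_eq, Kernel.fst_prod] at this
    exact this.symm
  · conv_rhs => rw [← π2.disintegrate π2.condKernel, f2]
    have := Measure.compProd_map (μ := ν) (κ := π1.condKernel ×ₖ π2.condKernel)
      (measurable_snd : Measurable (Prod.snd : Euc d × Euc d → Euc d))
    rw [← Kernel.snd_eq, Kernel.snd_prod] at this
    exact this.symm

/-- Gamma as a set of probability measures -/
def GP {d : ℕ} (ν μ1 μ2 : Measure (Euc d)) : Set (ProbabilityMeasure (Euc d × Euc d × Euc d)) :=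
  {ρ | (ρ : Measure (Euc d × Euc d × Euc d)) ∈ Gamma ν μ1 μ2}

lemma gamma_marg {d : ℕ} {ν μ1 μ2 : Measure (Euc d)} {ρ : Measure (Euc d × Euc d × Euc d)}
    (h : ρ ∈ Gamma ν μ1 μ2) : ρ.map Prod.fst = ν ∧ ρ.map (fun p => p.2.1) = μ1 ∧
      ρ.map (fun p => p.2.2) = μ2 := by
  obtain ⟨_, ⟨⟨_, a1, a2⟩, _⟩, ⟨⟨_, b1, b2⟩, _⟩⟩ := h
  rw [Measure.map_map (by fun_prop) (by fun_prop)] at a1 a2 b1 b2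
  exact ⟨a1, a2, b2⟩

lemma gamma_coupling {d : ℕ} {ν μ1 μ2 : Measure (Euc d)} {ρ : Measure (Euc d × Euc d × Euc d)}
    (h : ρ ∈ Gamma ν μ1 μ2) : ρ.map Prod.snd ∈ Coupling μ1 μ2 := by
  have hm := gamma_marg h
  have := h.1
  refine ⟨Measure.isProbabilityMeasure_map (by fun_prop), ?_, ?_⟩
  · rw [Measure.map_map (by fun_prop) (by fun_prop)]; exact hm.2.1
  · rw [Measure.map_map (by fun_prop) (by fun_prop)]; exact hm.2.2

lemma pivotCost_eq {d : ℕ} (ρ : Measure (Euc d × Euc d × Euc d)) :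
    pivotCost ρ = (lcost (ρ.map Prod.snd)).toReal := by
  rw [← tCost_eq_lcost]
  unfold pivotCost tCost
  rw [integral_map (by fun_prop)]
  exact (by fun_prop : Continuous fun p : Euc d × Euc d => ‖p.1 - p.2‖ ^ 2).aestronglyMeasurable

lemma isCompact_GP {d : ℕ} {ν μ1 μ2 : Measure (Euc d)}
    (hν : ν ∈ (P2 : Set (Measure (Euc d)))) (h1 : μ1 ∈ (P2 : Set (Measure (Euc d))))
    (h2 : μ2 ∈ (P2 : Set (Measure (Euc d)))) : IsCompact (GP ν μ1 μ2) := by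
  have := hν.1
  have := h1.1
  have := h2.1
  have hc : IsClosed (GP ν μ1 μ2) := by
    have c1 : Continuous fun p : Euc d × Euc d × Euc d => (p.1, p.2.1) := by fun_prop
    have c2 : Continuous fun p : Euc d × Euc d × Euc d => (p.1, p.2.2) := by fun_prop
    convert ((optPlan_desc hν h1).2.preimage (ProbabilityMeasure.continuous_map c1)).inter
      ((optPlan_desc hν h2).2.preimage (ProbabilityMeasure.continuous_map c2)) using 1
    ext ρ
    exact ⟨fun h => h.2, fun h => ⟨inferInstance, h⟩⟩
  rw [← hc.closure_eq]
  apply isCompact_closure_of_isTightMeasureSet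
  apply IsTightMeasureSet.prodMk
  · apply tight_map ν
    rintro _ ⟨ρ, hρ, rfl⟩
    exact (gamma_marg hρ).1
  · apply IsTightMeasureSet.prodMk
    · refine (isTightMeasureSet_singleton (μ := μ1)).subset ?_
      rintro _ ⟨_, ⟨_, ⟨ρ, hρ, rfl⟩, rfl⟩, rfl⟩
      exact (gamma_coupling hρ).2.1
    · refine (isTightMeasureSet_singleton (μ := μ2)).subset ?_
      rintro _ ⟨_, ⟨_, ⟨ρ, hρ, rfl⟩, rfl⟩, rfl⟩
      exact (gamma_coupling hρ).2.2

/-- the infimum defining the ν-based Wasserstein discrepancy is attained. -/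
theorem Wnusq_inf_attained {d : ℕ} (ν μ1 μ2 : Measure (Euc d))
    (hν : ν ∈ (P2 : Set (Measure (Euc d)))) (h1 : μ1 ∈ (P2 : Set (Measure (Euc d))))
    (h2 : μ2 ∈ (P2 : Set (Measure (Euc d)))) :
    ∃ ρstar ∈ Gamma ν μ1 μ2, pivotCost ρstar = Wnusq ν μ1 μ2 := by
  obtain ⟨π1, o1⟩ := (optPlan_desc hν h1).1
  obtain ⟨π2, o2⟩ := (optPlan_desc hν h2).1
  obtain ⟨ρ, hρ, e1, e2⟩ := gluing o1.1 o2.1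
  have ne : (GP ν μ1 μ2).Nonempty :=
    ⟨⟨ρ, hρ⟩, hρ, by rw [← e1] at o1; exact o1, by rw [← e2] at o2; exact o2⟩
  have hl := lsc_lcost.comp
    (ProbabilityMeasure.continuous_map (continuous_snd : Continuous
      (Prod.snd : Euc d × Euc d × Euc d → Euc d × Euc d)))
  obtain ⟨ρ₀, m0, hmin⟩ := LowerSemicontinuousOn.exists_isMinOn ne (isCompact_GP hν h1 h2)
    (hl.lowerSemicontinuousOn _)
  refine ⟨ρ₀, m0, Eq.symm ?_⟩
  refine IsLeast.csInf_eq ⟨⟨_, m0, rfl⟩, ?_⟩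
  rintro _ ⟨ρ', hρ', rfl⟩
  rw [pivotCost_eq, pivotCost_eq]
  exact ENNReal.toReal_mono (lcost_ne_top h1 h2 (gamma_coupling hρ'))
    (hmin (show (⟨ρ', hρ'.1⟩ : ProbabilityMeasure _) ∈ GP ν μ1 μ2 from hρ'))

end
end

section
/- Let ν, μ1, μ2 ∈ P_2(ℝ^d). Then W_ν²(μ1, μ2) = min over pairs γ1 ∈ Π*(ν, μ1), γ2 ∈ Π*(ν, μ2) of ∫_{ℝ^d} W_2²(γ1^y, γ2^y) dν(y), where for i ∈ {1,2}, (γ_i^y)_{y ∈ ℝ^d} is the disintegration (conditional kernel) of γ_i with respect to its first marginal ν, i.e. γ_i(dy, dx) = ν(dy) γ_i^y(dx); moreover the minimum on the right-hand side is attained. -/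
open MeasureTheory Filter Topology ProbabilityTheory
open scoped ENNReal RealInnerProductSpace Classical

noncomputable section

set_option linter.unusedSectionVars false

section Aux

variable {A B : Type*} [MetricSpace A] [CompleteSpace A] [SecondCountableTopology A]
  [MeasurableSpace A] [BorelSpace A]
  [MetricSpace B] [CompleteSpace B] [SecondCountableTopology B]
  [MeasurableSpace B] [BorelSpace B]

lemma aux_tight {A : Type*} [MetricSpace A] [CompleteSpace A] [SecondCountableTopology A]
    [MeasurableSpace A] [BorelSpace A] (u : ℕ → ProbabilityMeasure A) (μ : ProbabilityMeasure A)
    (h : Tendsto u atTop (𝓝 μ)) :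
    IsTightMeasureSet {((μ : ProbabilityMeasure A) : Measure A) | μ ∈ Set.range u} := by
  apply isTightMeasureSet_of_isCompact_closure
  have hc := h.isCompact_insert_range
  exact hc.closure_of_subset (Set.subset_insert _ _)

lemma aux_compact (π : ℕ → ProbabilityMeasure (A × B))
    (μs : ℕ → ProbabilityMeasure A) (νs : ℕ → ProbabilityMeasure B)
    (μ : ProbabilityMeasure A) (ν : ProbabilityMeasure B)
    (hμ : Tendsto μs atTop (𝓝 μ)) (hν : Tendsto νs atTop (𝓝 ν))
    (h1 : ∀ n, (π n : Measure (A × B)).map Prod.fst = μs n)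
    (h2 : ∀ n, (π n : Measure (A × B)).map Prod.snd = νs n) :
    ∃ (p : ProbabilityMeasure (A × B)) (φ : ℕ → ℕ), StrictMono φ ∧
      Tendsto (fun n => π (φ n)) atTop (𝓝 p) := by
  have ht : IsTightMeasureSet
      {((μ : ProbabilityMeasure (A × B)) : Measure (A × B)) | μ ∈ Set.range π} := by
    apply IsTightMeasureSet.prodMk
    · refine (aux_tight μs μ hμ).subset ?_
      rintro _ ⟨_, ⟨_, ⟨n, rfl⟩, rfl⟩, rfl⟩
      exact ⟨μs n, ⟨n, rfl⟩, (h1 n).symm⟩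
    · refine (aux_tight νs ν hν).subset ?_
      rintro _ ⟨_, ⟨_, ⟨n, rfl⟩, rfl⟩, rfl⟩
      exact ⟨νs n, ⟨n, rfl⟩, (h2 n).symm⟩
  have hc := isCompact_closure_of_isTightMeasureSet ht
  obtain ⟨p, -, φ, hφ, hp⟩ := hc.tendsto_subseq
    (x := π) (fun n => subset_closure ⟨n, rfl⟩)
  exact ⟨p, φ, hφ, hp⟩

lemma aux_lsc {A : Type*} [MetricSpace A] [MeasurableSpace A] [BorelSpace A]
    {f : A → ℝ} (hf : Continuous f) (h0 : 0 ≤ f)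
    (u : ℕ → ProbabilityMeasure A) (μ : ProbabilityMeasure A)
    (h : Tendsto u atTop (𝓝 μ)) (a : ℕ → ℝ≥0∞) (b : ℝ≥0∞) (ha : Tendsto a atTop (𝓝 b))
    (hle : ∀ n, ∫⁻ x, ENNReal.ofReal (f x) ∂(u n : Measure A) ≤ a n) :
    ∫⁻ x, ENNReal.ofReal (f x) ∂(μ : Measure A) ≤ b := by
  refine (lintegral_le_liminf_lintegral_of_forall_isOpen_measure_le_liminf_measure
    (μs := fun n => (u n : Measure A)) hf h0
    (fun G hG => ProbabilityMeasure.le_liminf_measure_open_of_tendsto h hG)).trans ?_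
  rw [← ha.liminf_eq]
  exact liminf_le_liminf (Eventually.of_forall hle)

/-- limits of pushforwards -/
lemma aux_map_lim {A B : Type*} [MetricSpace A] [MeasurableSpace A] [BorelSpace A]
    [MetricSpace B] [MeasurableSpace B] [BorelSpace B]
    {f : A → B} (hf : Continuous f)
    (u : ℕ → ProbabilityMeasure A) (μ : ProbabilityMeasure A)
    (h : Tendsto u atTop (𝓝 μ)) (v : ℕ → ProbabilityMeasure B) (w : ProbabilityMeasure B)
    (hv : Tendsto v atTop (𝓝 w)) (huv : ∀ n, (u n : Measure A).map f = v n) :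
    (μ : Measure A).map f = w := by
  have h1 := ProbabilityMeasure.tendsto_map_of_tendsto_of_continuous u μ h hf
  have : (fun i => (u i).map hf.measurable.aemeasurable) = v := by
    funext i
    apply Subtype.ext
    exact huv i
  rw [this] at h1
  have := tendsto_nhds_unique h1 hv
  exact congrArg (fun x : ProbabilityMeasure B => (x : Measure B)) this

lemma aux_pisys (A : Type*) [TopologicalSpace A] [SecondCountableTopology A] :
    ∃ s : ℕ → Set A, IsPiSystem (Set.range s) ∧ (∀ n, IsOpen (s n)) ∧
      ∀ u : Set A, IsOpen u → ∀ x ∈ u, ∃ t ∈ Set.range s, t ∈ 𝓝 x ∧ t ⊆ u := by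
  have hcb := TopologicalSpace.countable_countableBasis A
  have hc : Set.Countable {F : Set (Set A) | F.Finite ∧ F ⊆ TopologicalSpace.countableBasis A} :=
    Set.countable_ofPred_finite_subset hcb
  have hc' := hc.image (fun F => ⋂₀ F)
  obtain ⟨s, hs⟩ := hc'.exists_eq_range ⟨_, ∅, ⟨Set.finite_empty, Set.empty_subset _⟩, rfl⟩
  refine ⟨s, ?_, ?_, ?_⟩
  · rw [← hs]
    rintro _ ⟨F, ⟨hF, hF'⟩, rfl⟩ _ ⟨G, ⟨hG, hG'⟩, rfl⟩ -
    exact ⟨F ∪ G, ⟨hF.union hG, Set.union_subset hF' hG'⟩, Set.sInter_union _ _⟩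
  · intro n
    have : s n ∈ Set.range s := ⟨n, rfl⟩
    rw [← hs] at this
    obtain ⟨F, ⟨hF, hF'⟩, h⟩ := this
    rw [← h]
    exact hF.isOpen_sInter (fun t ht => TopologicalSpace.isOpen_of_mem_countableBasis (hF' ht))
  · intro u hu x hx
    obtain ⟨t, ht, hxt, htu⟩ :=
      (TopologicalSpace.isBasis_countableBasis A).exists_subset_of_mem_open hx hu
    refine ⟨t, ?_, (TopologicalSpace.isOpen_of_mem_countableBasis ht).mem_nhds hxt, htu⟩
    rw [← hs]
    exact ⟨{t}, ⟨Set.finite_singleton t, by simpa using ht⟩, by simp⟩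

lemma aux_conv {s : ℕ → Set A} (hs : IsPiSystem (Set.range s)) (ho : ∀ n, IsOpen (s n))
    (hn : ∀ u : Set A, IsOpen u → ∀ x ∈ u, ∃ t ∈ Set.range s, t ∈ 𝓝 x ∧ t ⊆ u)
    (u : ℕ → ProbabilityMeasure A) (μ : ProbabilityMeasure A)
    (h : ∀ k, Tendsto (fun n => (u n : Measure A) (s k)) atTop (𝓝 ((μ : Measure A) (s k)))) :
    Tendsto u atTop (𝓝 μ) := by
  refine hs.tendsto_probabilityMeasure_of_tendsto_of_mem ?_ hn ?_
  · rintro _ ⟨n, rfl⟩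
    exact (ho n).measurableSet
  · rintro _ ⟨n, rfl⟩
    exact (ENNReal.tendsto_toNNReal (measure_ne_top _ _)).comp (h n)

lemma aux_approx {Y X : Type*} [MeasurableSpace Y] [Nonempty Y] [TopologicalSpace X]
    [TopologicalSpace.PseudoMetrizableSpace X] [SecondCountableTopology X]
    [MeasurableSpace X] [BorelSpace X] (T : Y → X) (hT : Measurable T) :
    ∃ s : ℕ → SimpleFunc Y Y, ∀ y, Tendsto (fun n => T (s n y)) atTop (𝓝 (T y)) := by
  have hf : Measurable (fun y => (⟨T y, y, rfl⟩ : Set.range T)) := hT.subtype_mk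
  have hsm := hf.stronglyMeasurable
  refine ⟨fun n => (hsm.approx n).map (fun r => r.2.choose), fun y => ?_⟩
  have h := hsm.tendsto_approx y
  have h' := (continuous_subtype_val.tendsto _).comp h
  convert h' using 2 with n
  exact (hsm.approx n y).2.choose_spec

lemma aux_meas {Y X : Type*} [MeasurableSpace Y] [TopologicalSpace X]
    [FirstCountableTopology X]
    [MeasurableSpace X] [BorelSpace X] (T : Y → X) (hT : Measurable T) (V : Y → ℝ≥0∞)
    (hV : ∀ (y : Y) (u : ℕ → Y) (v : ℝ≥0∞), Tendsto (fun n => T (u n)) atTop (𝓝 (T y)) →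
      (∀ n, V (u n) ≤ v) → V y ≤ v) : Measurable V := by
  apply measurable_of_Iic
  intro v
  have : V ⁻¹' Set.Iic v = T ⁻¹' closure (T '' (V ⁻¹' Set.Iic v)) := by
    apply Set.Subset.antisymm
    · intro y hy
      exact subset_closure ⟨y, hy, rfl⟩
    · intro y hy
      have hy' : T y ∈ closure (T '' (V ⁻¹' Set.Iic v)) := hy
      rw [mem_closure_iff_seq_limit] at hy'
      obtain ⟨x, hx, hlim⟩ := hy'
      choose u hu hux using hx
      refine hV y u v ?_ hu
      simpa [hux] using hlim
  rw [this]
  exact hT isClosed_closure.measurableSet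

end Aux

section Aux2

variable {E : Type*} [NormedAddCommGroup E] [CompleteSpace E] [SecondCountableTopology E]
  [MeasurableSpace E] [BorelSpace E]

/-- cost of a plan, extended-valued -/
def eC {E : Type*} [NormedAddCommGroup E] [MeasurableSpace E] (π : Measure (E × E)) : ℝ≥0∞ :=
  ∫⁻ p, ENNReal.ofReal (‖p.1 - p.2‖ ^ 2) ∂π

/-- extended-valued squared Wasserstein -/
def eV {E : Type*} [NormedAddCommGroup E] [MeasurableSpace E] (μ ν : Measure E) : ℝ≥0∞ :=
  ⨅ π ∈ Coupling μ ν, eC π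

/-- extended-valued pivot cost -/
def eD {E : Type*} [NormedAddCommGroup E] [MeasurableSpace E] (ρ : Measure (E × E × E)) : ℝ≥0∞ :=
  ∫⁻ p, ENNReal.ofReal (‖p.2.1 - p.2.2‖ ^ 2) ∂ρ

/-- second moment -/
def m2 {E : Type*} [NormedAddCommGroup E] [MeasurableSpace E] (μ : Measure E) : ℝ≥0∞ :=
  ∫⁻ x, ENNReal.ofReal (‖x‖ ^ 2) ∂μ

lemma tCost_eq (π : Measure (E × E)) : tCost π = (eC π).toReal := by
  unfold tCost eC
  rw [integral_eq_lintegral_of_nonneg_ae]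
  · exact Eventually.of_forall fun _ => by positivity
  · exact Continuous.aestronglyMeasurable (by fun_prop)

lemma pivotCost_eq_s3 (ρ : Measure (E × E × E)) : pivotCost ρ = (eD ρ).toReal := by
  unfold pivotCost eD
  rw [integral_eq_lintegral_of_nonneg_ae]
  · exact Eventually.of_forall fun _ => by positivity
  · exact Continuous.aestronglyMeasurable (by fun_prop)

lemma m2_lt (μ : Measure E) (h : μ ∈ (P2 : Set (Measure E))) : m2 μ < ∞ := by
  have := h.2.lintegral_lt_top
  exact this

lemma ofReal_sub_sq_le (x y : E) : ENNReal.ofReal (‖x - y‖ ^ 2) ≤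
    2 * ENNReal.ofReal (‖x‖ ^ 2) + 2 * ENNReal.ofReal (‖y‖ ^ 2) := by
  have h2 : (2 : ℝ≥0∞) = ENNReal.ofReal 2 := by simp
  rw [h2, ← ENNReal.ofReal_mul (by norm_num), ← ENNReal.ofReal_mul (by norm_num),
    ← ENNReal.ofReal_add (by positivity) (by positivity)]
  apply ENNReal.ofReal_le_ofReal
  have h := norm_sub_le x y
  nlinarith [sq_nonneg (‖x‖ - ‖y‖), norm_nonneg (x - y), norm_nonneg x, norm_nonneg y]

lemma eC_le {μ ν : Measure E} {π : Measure (E × E)} (h : π ∈ Coupling μ ν) :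
    eC π ≤ 2 * m2 μ + 2 * m2 ν := by
  obtain ⟨-, h1, h2⟩ := h
  have e1 : m2 μ = ∫⁻ p, ENNReal.ofReal (‖p.1‖ ^ 2) ∂π := by
    rw [← h1, m2, lintegral_map (by fun_prop) measurable_fst]
  have e2 : m2 ν = ∫⁻ p, ENNReal.ofReal (‖p.2‖ ^ 2) ∂π := by
    rw [← h2, m2, lintegral_map (by fun_prop) measurable_snd]
  rw [e1, e2, ← lintegral_const_mul _ (by fun_prop), ← lintegral_const_mul _ (by fun_prop),
    ← lintegral_add_left (by fun_prop)]
  exact lintegral_mono fun p => ofReal_sub_sq_le _ _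

lemma coupling_limit (μs νs : ℕ → ProbabilityMeasure E) (μ ν : ProbabilityMeasure E)
    (hμ : Tendsto μs atTop (𝓝 μ)) (hν : Tendsto νs atTop (𝓝 ν))
    (π : ℕ → Measure (E × E)) (hπ : ∀ n, π n ∈ Coupling (μs n : Measure E) (νs n : Measure E))
    (a : ℕ → ℝ≥0∞) (b : ℝ≥0∞) (ha : Tendsto a atTop (𝓝 b)) (hle : ∀ n, eC (π n) ≤ a n) :
    ∃ p ∈ Coupling (μ : Measure E) (ν : Measure E), eC p ≤ b := by
  obtain ⟨p, φ, hφ, hp⟩ := aux_compact (fun n => ⟨π n, (hπ n).1⟩) μs νs μ ν hμ hν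
    (fun n => (hπ n).2.1) (fun n => (hπ n).2.2)
  refine ⟨p, ⟨inferInstance, ?_, ?_⟩, ?_⟩
  · exact aux_map_lim continuous_fst _ p hp (fun n => μs (φ n)) μ (hμ.comp hφ.tendsto_atTop)
      (fun n => (hπ _).2.1)
  · exact aux_map_lim continuous_snd _ p hp (fun n => νs (φ n)) ν (hν.comp hφ.tendsto_atTop)
      (fun n => (hπ _).2.2)
  · exact aux_lsc (f := fun p : E × E => ‖p.1 - p.2‖ ^ 2) (by fun_prop)
      (fun _ => by positivity) _ p hp (fun n => a (φ n)) b (ha.comp hφ.tendsto_atTop)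
      (fun n => hle _)

lemma coupling_nonempty (μ ν : Measure E) [IsProbabilityMeasure μ] [IsProbabilityMeasure ν] :
    μ.prod ν ∈ Coupling μ ν :=
  ⟨inferInstance, by simp, by simp⟩

lemma eV_le {μ ν : Measure E} {π : Measure (E × E)} (h : π ∈ Coupling μ ν) : eV μ ν ≤ eC π :=
  iInf₂_le π h

lemma eV_attained (μ ν : Measure E) [IsProbabilityMeasure μ] [IsProbabilityMeasure ν] :
    ∃ π ∈ Coupling μ ν, eC π = eV μ ν := by
  by_cases htop : eV μ ν = ∞
  · refine ⟨_, coupling_nonempty μ ν, ?_⟩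
    rw [htop, eq_top_iff, ← htop]
    exact eV_le (coupling_nonempty μ ν)
  have hn : ∀ n : ℕ, ∃ π ∈ Coupling μ ν, eC π ≤ eV μ ν + ((n : ℝ≥0∞))⁻¹ := by
    intro n
    have : eV μ ν < eV μ ν + ((n : ℝ≥0∞))⁻¹ :=
      ENNReal.lt_add_right htop (by simp)
    conv_lhs at this => unfold eV
    simp only [iInf_lt_iff] at this
    obtain ⟨π, hπ, h⟩ := this
    exact ⟨π, hπ, h.le⟩
  choose π hπ hle using hn
  have hlim : Tendsto (fun n : ℕ => eV μ ν + ((n : ℝ≥0∞))⁻¹) atTop (𝓝 (eV μ ν)) := by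
    simpa using ENNReal.tendsto_inv_nat_nhds_zero.const_add (eV μ ν)
  obtain ⟨p, hp, h⟩ := coupling_limit (fun _ => ⟨μ, inferInstance⟩) (fun _ => ⟨ν, inferInstance⟩)
    ⟨μ, inferInstance⟩ ⟨ν, inferInstance⟩ tendsto_const_nhds tendsto_const_nhds π hπ _ _ hlim hle
  exact ⟨p, hp, le_antisymm h (eV_le hp)⟩

lemma W2sq_eq (μ ν : Measure E) [IsProbabilityMeasure μ] [IsProbabilityMeasure ν]
    (h1 : m2 μ < ∞) (h2 : m2 ν < ∞) : W2sq μ ν = (eV μ ν).toReal := by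
  have hfin : ∀ π ∈ Coupling μ ν, eC π ≠ ∞ := fun π hπ =>
    ((eC_le hπ).trans_lt (by finiteness)).ne
  obtain ⟨π, hπ, h⟩ := eV_attained μ ν
  apply le_antisymm
  · rw [← h, ← tCost_eq]
    refine csInf_le ⟨0, ?_⟩ ⟨π, hπ, rfl⟩
    rintro _ ⟨q, -, rfl⟩
    rw [tCost_eq]; positivity
  · refine le_csInf ⟨_, π, hπ, rfl⟩ ?_
    rintro _ ⟨q, hq, rfl⟩
    rw [tCost_eq]
    exact ENNReal.toReal_mono (hfin q hq) (eV_le hq)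

lemma optPlan_iff (μ ν : Measure E) [IsProbabilityMeasure μ] [IsProbabilityMeasure ν]
    (h1 : m2 μ < ∞) (h2 : m2 ν < ∞) (π : Measure (E × E)) :
    π ∈ OptPlan μ ν ↔ π ∈ Coupling μ ν ∧ eC π ≤ eV μ ν := by
  have hfin : ∀ π ∈ Coupling μ ν, eC π ≠ ∞ := fun π hπ =>
    ((eC_le hπ).trans_lt (by finiteness)).ne
  constructor
  · rintro ⟨hc, h⟩
    refine ⟨hc, ?_⟩
    rw [tCost_eq, W2sq_eq μ ν h1 h2] at h
    have hV : eV μ ν ≠ ∞ := ne_top_of_le_ne_top (hfin π hc) (eV_le hc)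
    exact ((ENNReal.toReal_eq_toReal_iff' (hfin π hc) hV).1 h).le
  · rintro ⟨hc, h⟩
    refine ⟨hc, ?_⟩
    rw [tCost_eq, W2sq_eq μ ν h1 h2, le_antisymm h (eV_le hc)]

lemma compact3 (ρ : ℕ → ProbabilityMeasure (E × E × E)) (ν : ProbabilityMeasure E)
    (μ1s μ2s : ℕ → ProbabilityMeasure E) (μ1 μ2 : ProbabilityMeasure E)
    (h1 : Tendsto μ1s atTop (𝓝 μ1)) (h2 : Tendsto μ2s atTop (𝓝 μ2))
    (k0 : ∀ n, (ρ n : Measure (E × E × E)).map Prod.fst = ν)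
    (k1 : ∀ n, (ρ n : Measure (E × E × E)).map (fun p => p.2.1) = μ1s n)
    (k2 : ∀ n, (ρ n : Measure (E × E × E)).map (fun p => p.2.2) = μ2s n) :
    ∃ (p : ProbabilityMeasure (E × E × E)) (φ : ℕ → ℕ), StrictMono φ ∧
      Tendsto (fun n => ρ (φ n)) atTop (𝓝 p) := by
  obtain ⟨q, φ, hφ, hq⟩ := aux_compact
    (fun n => (ρ n).map (f := Prod.snd) measurable_snd.aemeasurable) μ1s μ2s μ1 μ2 h1 h2
    (fun n => by
      rw [← k1 n, ProbabilityMeasure.toMeasure_map, Measure.map_map (by fun_prop) (by fun_prop)]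
      rfl)
    (fun n => by
      rw [← k2 n, ProbabilityMeasure.toMeasure_map, Measure.map_map (by fun_prop) (by fun_prop)]
      rfl)
  obtain ⟨p, ψ, hψ, hp⟩ := aux_compact (fun n => ρ (φ n)) (fun _ => ν) _ ν q
    tendsto_const_nhds hq (fun n => k0 _) (fun n => rfl)
  exact ⟨p, _, hφ.comp hψ, hp⟩

end Aux2

section Aux3

variable {E : Type*} [NormedAddCommGroup E] [CompleteSpace E] [SecondCountableTopology E]
  [MeasurableSpace E] [BorelSpace E]

/-- bundle a probability measure -/
def pm {A : Type*} [MeasurableSpace A] (μ : Measure A) [h : IsProbabilityMeasure μ] :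
    ProbabilityMeasure A := ⟨μ, h⟩

lemma bind_eq (ν : Measure E) [IsProbabilityMeasure ν] (κ : Kernel E E) [IsMarkovKernel κ] :
    ν.bind (fun y => (κ y).map (fun x => (y, x))) = ν ⊗ₘ κ := by
  rw [Measure.compProd_eq_comp_prod]
  congr 1
  funext y
  rw [Kernel.prod_apply, Kernel.id_apply, Measure.dirac_prod]

lemma compProd_map12 (ν : Measure E) [IsProbabilityMeasure ν] (K : Kernel E (E × E))
    [IsMarkovKernel K] :
    (ν ⊗ₘ K).map (fun p => (p.1, p.2.1)) = ν ⊗ₘ (K.map Prod.fst) := by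
  rw [Measure.compProd_map measurable_fst]
  rfl

lemma compProd_map13 (ν : Measure E) [IsProbabilityMeasure ν] (K : Kernel E (E × E))
    [IsMarkovKernel K] :
    (ν ⊗ₘ K).map (fun p => (p.1, p.2.2)) = ν ⊗ₘ (K.map Prod.snd) := by
  rw [Measure.compProd_map measurable_snd]
  rfl

lemma eD_compProd (ν : Measure E) [IsProbabilityMeasure ν] (K : Kernel E (E × E))
    [IsMarkovKernel K] : eD (ν ⊗ₘ K) = ∫⁻ y, eC (K y) ∂ν := by
  unfold eD eC
  rw [Measure.lintegral_compProd (by fun_prop)]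

lemma compProd_tendsto (ν : Measure E) [IsProbabilityMeasure ν] (κs : ℕ → Kernel E E)
    (κ : Kernel E E) [∀ n, IsMarkovKernel (κs n)] [IsMarkovKernel κ]
    (h : ∀ y, Tendsto (fun n => pm (κs n y)) atTop
      (𝓝 (pm (κ y)))) :
    Tendsto (fun n => pm (ν ⊗ₘ κs n)) atTop
      (𝓝 (pm (ν ⊗ₘ κ))) := by
  rw [ProbabilityMeasure.tendsto_iff_forall_integral_tendsto]
  intro f
  have hi : ∀ (k : Kernel E E) [IsMarkovKernel k], ∫ p, f p ∂(ν ⊗ₘ k)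
      = ∫ y, ∫ x, f (y, x) ∂(k y) ∂ν := fun k _ =>
    Measure.integral_compProd (f.integrable _)
  simp only [pm, ProbabilityMeasure.coe_mk]
  simp_rw [hi]
  apply tendsto_integral_of_dominated_convergence (fun _ => ‖f‖)
  · intro n
    exact (MeasureTheory.StronglyMeasurable.integral_kernel_prod_right'
      (κ := κs n) f.continuous.stronglyMeasurable).aestronglyMeasurable
  · exact integrable_const _
  · intro n
    refine Eventually.of_forall fun y => ?_
    have := norm_integral_le_of_norm_le_const (μ := κs n y) (f := fun x => f (y, x))
      (Eventually.of_forall fun x => f.norm_coe_le_norm (y, x))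
    simpa using this
  · refine Eventually.of_forall fun y => ?_
    have := (ProbabilityMeasure.tendsto_iff_forall_integral_tendsto.1 (h y))
      (f.compContinuous ⟨fun x => (y, x), by fun_prop⟩)
    exact this

lemma eV_meas (κ1 κ2 : Kernel E E) [IsMarkovKernel κ1] [IsMarkovKernel κ2] :
    Measurable (fun y => eV (κ1 y) (κ2 y)) := by
  obtain ⟨s, hs, ho, hn⟩ := aux_pisys E
  refine aux_meas (fun y => ((fun k => κ1 y (s k), fun k => κ2 y (s k)) :
    (ℕ → ℝ≥0∞) × (ℕ → ℝ≥0∞))) ?_ _ ?_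
  · apply Measurable.prodMk
    · exact measurable_pi_lambda _ fun k => κ1.measurable_coe (ho k).measurableSet
    · exact measurable_pi_lambda _ fun k => κ2.measurable_coe (ho k).measurableSet
  · intro y u v hlim hle
    have c1 := aux_conv hs ho hn (fun n => (pm (κ1 (u n)))) (pm (κ1 y))
      (fun k => (tendsto_pi_nhds.1 hlim.fst_nhds) k)
    have c2 := aux_conv hs ho hn (fun n => (pm (κ2 (u n)))) (pm (κ2 y))
      (fun k => (tendsto_pi_nhds.1 hlim.snd_nhds) k)
    choose π hπ hC using fun n => eV_attained (κ1 (u n)) (κ2 (u n))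
    obtain ⟨p, hp, h⟩ := coupling_limit _ _ _ _ c1 c2 π hπ (fun _ => v) v tendsto_const_nhds
      (fun n => (hC n).trans_le (hle n))
    exact (eV_le hp).trans h

lemma exists_glue (ν : Measure E) [IsProbabilityMeasure ν] (κ1 κ2 : Kernel E E)
    [IsMarkovKernel κ1] [IsMarkovKernel κ2] (hfin : ∫⁻ y, eV (κ1 y) (κ2 y) ∂ν ≠ ∞) :
    ∃ ρ : Measure (E × E × E), IsProbabilityMeasure ρ ∧
      ρ.map (fun p => (p.1, p.2.1)) = ν ⊗ₘ κ1 ∧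
      ρ.map (fun p => (p.1, p.2.2)) = ν ⊗ₘ κ2 ∧
      eD ρ ≤ ∫⁻ y, eV (κ1 y) (κ2 y) ∂ν := by
  obtain ⟨s, hs, ho, hn⟩ := aux_pisys E
  set V : E → ℝ≥0∞ := fun y => eV (κ1 y) (κ2 y) with hVdef
  have hV : Measurable V := eV_meas κ1 κ2
  obtain ⟨σ, hσ⟩ := aux_approx (fun y => ((fun k => κ1 y (s k), fun k => κ2 y (s k), V y) :
    (ℕ → ℝ≥0∞) × (ℕ → ℝ≥0∞) × ℝ≥0∞))
    (by
      refine Measurable.prodMk ?_ (Measurable.prodMk ?_ hV)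
      · exact measurable_pi_lambda _ fun k => κ1.measurable_coe (ho k).measurableSet
      · exact measurable_pi_lambda _ fun k => κ2.measurable_coe (ho k).measurableSet)
  have c1 : ∀ y, Tendsto (fun n => pm (κ1 (σ n y))) atTop
      (𝓝 (pm (κ1 y))) := fun y =>
    aux_conv hs ho hn _ _ (fun k => (tendsto_pi_nhds.1 (hσ y).fst_nhds) k)
  have c2 : ∀ y, Tendsto (fun n => pm (κ2 (σ n y))) atTop
      (𝓝 (pm (κ2 y))) := fun y =>
    aux_conv hs ho hn _ _ (fun k => (tendsto_pi_nhds.1 (hσ y).snd_nhds.fst_nhds) k)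
  have c3 : ∀ y, Tendsto (fun n => V (σ n y)) atTop (𝓝 (V y)) := fun y =>
    (hσ y).snd_nhds.snd_nhds
  choose opt hopt hoptC using fun y => eV_attained (κ1 y) (κ2 y)
  have hms : ∀ n, MeasurableSet {y | V (σ n y) ≤ V y + 1} := fun n =>
    measurableSet_le (hV.comp (σ n).measurable) (hV.add_const 1)
  let K : ℕ → Kernel E (E × E) := fun n =>
    ⟨fun y => if V (σ n y) ≤ V y + 1 then opt (σ n y) else Measure.dirac (0, 0),
      Measurable.ite (hms n) ((σ n).map opt).measurable measurable_const⟩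
  have hK : ∀ n y, K n y = if V (σ n y) ≤ V y + 1 then opt (σ n y) else Measure.dirac (0, 0) :=
    fun n y => rfl
  have hKm : ∀ n, IsMarkovKernel (K n) := by
    intro n
    refine ⟨fun y => ?_⟩
    rw [hK]
    split_ifs
    · exact (hopt _).1
    · infer_instance
  have hev : ∀ y, ∀ᶠ n in atTop, K n y = opt (σ n y) := by
    intro y
    have : ∀ᶠ n in atTop, V (σ n y) ≤ V y + 1 := by
      by_cases hy : V y = ∞
      · simp [hy]
      · exact ((c3 y).eventually_lt_const (ENNReal.lt_add_right hy one_ne_zero)).mono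
          fun _ h => h.le
    exact this.mono fun n h => by rw [hK, if_pos h]
  have hcost : ∀ n y, eC (K n y) ≤ min (V (σ n y)) (V y + 1) := by
    intro n y
    rw [hK]
    split_ifs with h
    · rw [hoptC, min_eq_left h]
    · simp [eC, lintegral_dirac]
  have hm1 : ∀ n, IsMarkovKernel ((K n).map Prod.fst) := fun n =>
    Kernel.IsMarkovKernel.map _ measurable_fst
  have hm2 : ∀ n, IsMarkovKernel ((K n).map Prod.snd) := fun n =>
    Kernel.IsMarkovKernel.map _ measurable_snd
  have t1 := compProd_tendsto ν (fun n => (K n).map Prod.fst) κ1 (by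
    intro y
    refine (c1 y).congr' ?_
    filter_upwards [hev y] with n h
    apply Subtype.ext
    change κ1 (σ n y) = (K n).map Prod.fst y
    rw [Kernel.map_apply _ measurable_fst, h, (hopt _).2.1])
  have t2 := compProd_tendsto ν (fun n => (K n).map Prod.snd) κ2 (by
    intro y
    refine (c2 y).congr' ?_
    filter_upwards [hev y] with n h
    apply Subtype.ext
    change κ2 (σ n y) = (K n).map Prod.snd y
    rw [Kernel.map_apply _ measurable_snd, h, (hopt _).2.2])
  have tl : Tendsto (fun n => ∫⁻ y, min (V (σ n y)) (V y + 1) ∂ν) atTop (𝓝 (∫⁻ y, V y ∂ν)) := by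
    apply tendsto_lintegral_of_dominated_convergence (fun y => V y + 1)
    · intro n
      exact (hV.comp (σ n).measurable).min (hV.add_const 1)
    · intro n
      exact Eventually.of_forall fun y => min_le_right _ _
    · rw [lintegral_add_right _ measurable_const]
      simp [hfin]
    · refine Eventually.of_forall fun y => ?_
      have := (c3 y).min (tendsto_const_nhds (x := V y + 1))
      rwa [min_eq_left le_self_add] at this
  have s1 := ProbabilityMeasure.tendsto_map_of_tendsto_of_continuous _ _ t1 continuous_snd
  have s2 := ProbabilityMeasure.tendsto_map_of_tendsto_of_continuous _ _ t2 continuous_snd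
  obtain ⟨p, φ, hφ, hp⟩ := compact3 (fun n => (pm (ν ⊗ₘ K n))) (pm (ν))
    _ _ _ _ s1 s2
    (fun n => by
      change (ν ⊗ₘ K n).fst = ν
      simp)
    (fun n => by
      change (ν ⊗ₘ K n).map (fun p => p.2.1) = (ν ⊗ₘ (K n).map Prod.fst).map Prod.snd
      rw [← compProd_map12, Measure.map_map (by fun_prop) (by fun_prop)]
      rfl)
    (fun n => by
      change (ν ⊗ₘ K n).map (fun p => p.2.2) = (ν ⊗ₘ (K n).map Prod.snd).map Prod.snd
      rw [← compProd_map13, Measure.map_map (by fun_prop) (by fun_prop)]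
      rfl)
  refine ⟨p, inferInstance, ?_, ?_, ?_⟩
  · exact aux_map_lim (f := fun p : E × E × E => (p.1, p.2.1)) (by fun_prop) _ p hp _ _
      (t1.comp hφ.tendsto_atTop) (fun n => compProd_map12 ν _)
  · exact aux_map_lim (f := fun p : E × E × E => (p.1, p.2.2)) (by fun_prop) _ p hp _ _
      (t2.comp hφ.tendsto_atTop) (fun n => compProd_map13 ν _)
  · exact aux_lsc (f := fun p : E × E × E => ‖p.2.1 - p.2.2‖ ^ 2) (by fun_prop)
      (fun _ => by positivity) _ p hp _ _ (tl.comp hφ.tendsto_atTop)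
      (fun n => (eD_compProd ν (K (φ n))).trans_le (lintegral_mono fun y => hcost _ y))

end Aux3

section Aux4

variable {E : Type*} [NormedAddCommGroup E] [CompleteSpace E] [SecondCountableTopology E]
  [MeasurableSpace E] [BorelSpace E]

/-- second moments of a kernel disintegrating a coupling -/
lemma m2_kernel (ν μ : Measure E) [IsProbabilityMeasure ν] (κ : Kernel E E) [IsMarkovKernel κ]
    (h : (ν ⊗ₘ κ) ∈ Coupling ν μ) : ∫⁻ y, m2 (κ y) ∂ν = m2 μ := by
  rw [← h.2.2, m2, lintegral_map (by fun_prop) measurable_snd,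
    Measure.lintegral_compProd (by fun_prop)]
  rfl

lemma m2_meas (κ : Kernel E E) [IsMarkovKernel κ] : Measurable (fun y => m2 (κ y)) :=
  Measurable.lintegral_kernel (by fun_prop)

lemma disint_facts (ν μ1 μ2 : Measure E) [IsProbabilityMeasure ν] (κ1 κ2 : Kernel E E)
    [IsMarkovKernel κ1] [IsMarkovKernel κ2] (h1 : m2 μ1 < ∞) (h2 : m2 μ2 < ∞)
    (k1 : (ν ⊗ₘ κ1) ∈ Coupling ν μ1) (k2 : (ν ⊗ₘ κ2) ∈ Coupling ν μ2) :
    ∫⁻ y, eV (κ1 y) (κ2 y) ∂ν ≠ ∞ ∧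
      ∫ y, W2sq (κ1 y) (κ2 y) ∂ν = (∫⁻ y, eV (κ1 y) (κ2 y) ∂ν).toReal := by
  have e1 := m2_kernel ν μ1 κ1 k1
  have e2 := m2_kernel ν μ2 κ2 k2
  have hfin : ∫⁻ y, eV (κ1 y) (κ2 y) ∂ν ≠ ∞ := by
    have : ∫⁻ y, eV (κ1 y) (κ2 y) ∂ν ≤ ∫⁻ y, (2 * m2 (κ1 y) + 2 * m2 (κ2 y)) ∂ν :=
      lintegral_mono fun y =>
        (eV_le (coupling_nonempty _ _)).trans (eC_le (coupling_nonempty _ _))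
    refine (this.trans_lt ?_).ne
    rw [lintegral_add_left ((m2_meas κ1).const_mul 2), lintegral_const_mul _ (m2_meas κ1),
      lintegral_const_mul _ (m2_meas κ2), e1, e2]
    finiteness
  refine ⟨hfin, ?_⟩
  have a1 : ∀ᵐ y ∂ν, m2 (κ1 y) < ∞ := ae_lt_top (m2_meas κ1) (by rw [e1]; exact h1.ne)
  have a2 : ∀ᵐ y ∂ν, m2 (κ2 y) < ∞ := ae_lt_top (m2_meas κ2) (by rw [e2]; exact h2.ne)
  have ae : (fun y => W2sq (κ1 y) (κ2 y)) =ᵐ[ν] fun y => (eV (κ1 y) (κ2 y)).toReal := by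
    filter_upwards [a1, a2] with y b1 b2
    exact W2sq_eq _ _ b1 b2
  rw [integral_congr_ae ae, integral_toReal (eV_meas κ1 κ2).aemeasurable
    (ae_lt_top (eV_meas κ1 κ2) hfin)]

lemma lower (ν μ1 μ2 : Measure E) [IsProbabilityMeasure ν] (κ1 κ2 : Kernel E E)
    [IsMarkovKernel κ1] [IsMarkovKernel κ2] (h1 : m2 μ1 < ∞) (h2 : m2 μ2 < ∞)
    (k1 : (ν ⊗ₘ κ1) ∈ OptPlan ν μ1) (k2 : (ν ⊗ₘ κ2) ∈ OptPlan ν μ2) :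
    (∃ ρ, ρ ∈ Gamma ν μ1 μ2) ∧ Wnusq ν μ1 μ2 ≤ ∫ y, W2sq (κ1 y) (κ2 y) ∂ν := by
  obtain ⟨hfin, heq⟩ := disint_facts ν μ1 μ2 κ1 κ2 h1 h2 k1.1 k2.1
  obtain ⟨ρ, hρ, m12, m13, hD⟩ := exists_glue ν κ1 κ2 hfin
  have hΓ : ρ ∈ Gamma ν μ1 μ2 := ⟨hρ, by rw [m12]; exact k1, by rw [m13]; exact k2⟩
  refine ⟨⟨ρ, hΓ⟩, ?_⟩
  rw [heq]
  have : Wnusq ν μ1 μ2 ≤ pivotCost ρ := by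
    refine csInf_le ⟨0, ?_⟩ ⟨ρ, hΓ, rfl⟩
    rintro _ ⟨q, -, rfl⟩
    rw [pivotCost_eq_s3]; positivity
  refine this.trans ?_
  rw [pivotCost_eq_s3]
  exact ENNReal.toReal_mono hfin hD

lemma disintegrate [Nonempty E] {F : Type*} [MeasurableSpace F] [StandardBorelSpace F] [Nonempty F]
    (ν : Measure E) (γ : Measure (E × F)) [IsProbabilityMeasure γ] (h : γ.map Prod.fst = ν) :
    ∃ κ : Kernel E F, IsMarkovKernel κ ∧ ν ⊗ₘ κ = γ := by
  refine ⟨γ.condKernel, inferInstance, ?_⟩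
  have := γ.disintegrate γ.condKernel
  rw [← h]
  exact this

lemma opt_exists (μ ν : Measure E) [IsProbabilityMeasure μ] [IsProbabilityMeasure ν]
    (h1 : m2 μ < ∞) (h2 : m2 ν < ∞) : ∃ π, π ∈ OptPlan μ ν := by
  obtain ⟨π, hπ, h⟩ := eV_attained μ ν
  exact ⟨π, (optPlan_iff μ ν h1 h2 π).2 ⟨hπ, h.le⟩⟩

lemma marg_of_gamma {ν μ1 μ2 : Measure E} {ρ : Measure (E × E × E)} (h : ρ ∈ Gamma ν μ1 μ2) :
    ρ.map Prod.fst = ν ∧ ρ.map (fun p => p.2.1) = μ1 ∧ ρ.map (fun p => p.2.2) = μ2 := by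
  obtain ⟨-, a, b⟩ := h
  refine ⟨?_, ?_, ?_⟩
  · rw [← a.1.2.1, Measure.map_map (by fun_prop) (by fun_prop)]
    rfl
  · rw [← a.1.2.2, Measure.map_map (by fun_prop) (by fun_prop)]
    rfl
  · rw [← b.1.2.2, Measure.map_map (by fun_prop) (by fun_prop)]
    rfl

lemma eD_fin {ν μ1 μ2 : Measure E} (h1 : m2 μ1 < ∞) (h2 : m2 μ2 < ∞)
    {ρ : Measure (E × E × E)} (h : ρ ∈ Gamma ν μ1 μ2) : eD ρ ≠ ∞ := by
  have : IsProbabilityMeasure ρ := h.1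
  obtain ⟨-, a, b⟩ := marg_of_gamma h
  have hc : ρ.map Prod.snd ∈ Coupling μ1 μ2 := by
    refine ⟨Measure.isProbabilityMeasure_map (by fun_prop), ?_, ?_⟩
    · rw [← a, Measure.map_map (by fun_prop) (by fun_prop)]
      rfl
    · rw [← b, Measure.map_map (by fun_prop) (by fun_prop)]
      rfl
  have he : eD ρ = eC (ρ.map Prod.snd) := by
    rw [eC, lintegral_map (by fun_prop) (by fun_prop)]
    rfl
  rw [he]
  exact ((eC_le hc).trans_lt (by finiteness)).ne

lemma map_cont_opt {μ ν : Measure E} [IsProbabilityMeasure μ] [IsProbabilityMeasure ν]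
    (h1 : m2 μ < ∞) (h2 : m2 ν < ∞) {f : E × E × E → E × E} (hf : Continuous f)
    (ρ : ℕ → ProbabilityMeasure (E × E × E)) (p : ProbabilityMeasure (E × E × E))
    (hp : Tendsto ρ atTop (𝓝 p))
    (h : ∀ n, (ρ n : Measure (E × E × E)).map f ∈ OptPlan μ ν) :
    (p : Measure (E × E × E)).map f ∈ OptPlan μ ν := by
  have hl := ProbabilityMeasure.tendsto_map_of_tendsto_of_continuous ρ p hp hf
  rw [optPlan_iff μ ν h1 h2]
  refine ⟨⟨Measure.isProbabilityMeasure_map hf.measurable.aemeasurable, ?_, ?_⟩, ?_⟩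
  · exact aux_map_lim continuous_fst _ _ hl (fun _ => pm μ) (pm μ) tendsto_const_nhds
      (fun n => (h n).1.2.1)
  · exact aux_map_lim continuous_snd _ _ hl (fun _ => pm ν) (pm ν) tendsto_const_nhds
      (fun n => (h n).1.2.2)
  · exact aux_lsc (f := fun p : E × E => ‖p.1 - p.2‖ ^ 2) (by fun_prop)
      (fun _ => by positivity) _ _ hl (fun _ => eV μ ν) _ tendsto_const_nhds
      (fun n => ((optPlan_iff μ ν h1 h2 _).1 (h n)).2)

lemma gamma_min (ν μ1 μ2 : Measure E) [IsProbabilityMeasure ν] [IsProbabilityMeasure μ1]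
    [IsProbabilityMeasure μ2] (h0 : m2 ν < ∞) (h1 : m2 μ1 < ∞) (h2 : m2 μ2 < ∞)
    (hne : ∃ ρ, ρ ∈ Gamma ν μ1 μ2) :
    ∃ ρ ∈ Gamma ν μ1 μ2, pivotCost ρ ≤ Wnusq ν μ1 μ2 := by
  obtain ⟨ρ0, hρ0⟩ := hne
  have hn : ∀ n : ℕ, ∃ ρ ∈ Gamma ν μ1 μ2, pivotCost ρ < Wnusq ν μ1 μ2 + 1 / ((n : ℝ) + 1) := by
    intro n
    have hpos : (0 : ℝ) < 1 / ((n : ℝ) + 1) := by positivity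
    obtain ⟨_, ⟨ρ, hρ, rfl⟩, hlt⟩ := exists_lt_of_csInf_lt (s := pivotCost '' Gamma ν μ1 μ2)
      ⟨_, ρ0, hρ0, rfl⟩ (b := Wnusq ν μ1 μ2 + 1 / ((n : ℝ) + 1)) (by
        change Wnusq ν μ1 μ2 < _
        linarith)
    exact ⟨ρ, hρ, hlt⟩
  choose ρ hρ hlt using hn
  obtain ⟨p, φ, hφ, hp⟩ := compact3 (fun n => ⟨ρ n, (hρ n).1⟩) (pm ν) (fun _ => pm μ1)
    (fun _ => pm μ2) (pm μ1) (pm μ2) tendsto_const_nhds tendsto_const_nhds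
    (fun n => (marg_of_gamma (hρ n)).1) (fun n => (marg_of_gamma (hρ n)).2.1)
    (fun n => (marg_of_gamma (hρ n)).2.2)
  have hW : 0 ≤ Wnusq ν μ1 μ2 := by
    apply Real.sInf_nonneg
    rintro _ ⟨q, -, rfl⟩
    rw [pivotCost_eq_s3]; positivity
  refine ⟨p, ⟨inferInstance, ?_, ?_⟩, ?_⟩
  · exact map_cont_opt h0 h1 (by fun_prop) _ p hp (fun n => (hρ _).2.1)
  · exact map_cont_opt h0 h2 (by fun_prop) _ p hp (fun n => (hρ _).2.2)
  · have hlim : Tendsto (fun n : ℕ => ENNReal.ofReal (Wnusq ν μ1 μ2 + 1 / ((n : ℝ) + 1))) atTop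
        (𝓝 (ENNReal.ofReal (Wnusq ν μ1 μ2))) := by
      apply ENNReal.tendsto_ofReal
      simpa using (tendsto_one_div_add_atTop_nhds_zero_nat (𝕜 := ℝ)).const_add (Wnusq ν μ1 μ2)
    have : eD (p : Measure (E × E × E)) ≤ ENNReal.ofReal (Wnusq ν μ1 μ2) :=
      aux_lsc (f := fun p : E × E × E => ‖p.2.1 - p.2.2‖ ^ 2) (by fun_prop)
        (fun _ => by positivity) _ p hp _ _ (hlim.comp hφ.tendsto_atTop)
        (fun n => by
          have h := (hlt (φ n)).le
          rw [pivotCost_eq_s3] at h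
          exact (ENNReal.le_ofReal_iff_toReal_le (eD_fin h1 h2 (hρ _)) (by positivity)).2 h)
    rw [pivotCost_eq_s3]
    exact ENNReal.toReal_le_of_le_ofReal hW this

lemma upper (ν : Measure E) [IsProbabilityMeasure ν] (K : Kernel E (E × E)) [IsMarkovKernel K] :
    ∫⁻ y, eV (K.map Prod.fst y) (K.map Prod.snd y) ∂ν ≤ eD (ν ⊗ₘ K) := by
  rw [eD_compProd]
  refine lintegral_mono fun y => eV_le ⟨inferInstance, ?_, ?_⟩
  · rw [Kernel.map_apply _ measurable_fst]
  · rw [Kernel.map_apply _ measurable_snd]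

end Aux4

/-- disintegration formula for the ν-based Wasserstein discrepancy:
`W_ν²(μ1, μ2)` equals the minimum over optimal plans `γ1 ∈ Π*(ν, μ1)`, `γ2 ∈ Π*(ν, μ2)` of
`∫ W₂²(γ1^y, γ2^y) dν(y)`, where `γ_i^y` are disintegration kernels of `γ_i` with respect
to `ν`, and this minimum is attained. -/
theorem Wnusq_disintegration {d : ℕ} (ν μ1 μ2 : Measure (Euc d))
    (hν : ν ∈ (P2 : Set (Measure (Euc d)))) (h1 : μ1 ∈ (P2 : Set (Measure (Euc d))))
    (h2 : μ2 ∈ (P2 : Set (Measure (Euc d)))) :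
    (∃ γ1 ∈ OptPlan ν μ1, ∃ γ2 ∈ OptPlan ν μ2,
      ∃ κ1 κ2 : Kernel (Euc d) (Euc d),
        IsMarkovKernel κ1 ∧ IsMarkovKernel κ2 ∧
        ν.bind (fun y => (κ1 y).map (fun x => (y, x))) = γ1 ∧
        ν.bind (fun y => (κ2 y).map (fun x => (y, x))) = γ2 ∧
        Wnusq ν μ1 μ2 = ∫ y, W2sq (κ1 y) (κ2 y) ∂ν) ∧
    (∀ γ1 ∈ OptPlan ν μ1, ∀ γ2 ∈ OptPlan ν μ2,
      ∀ κ1 κ2 : Kernel (Euc d) (Euc d),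
        IsMarkovKernel κ1 → IsMarkovKernel κ2 →
        ν.bind (fun y => (κ1 y).map (fun x => (y, x))) = γ1 →
        ν.bind (fun y => (κ2 y).map (fun x => (y, x))) = γ2 →
        Wnusq ν μ1 μ2 ≤ ∫ y, W2sq (κ1 y) (κ2 y) ∂ν) := by
  have : IsProbabilityMeasure ν := hν.1
  have : IsProbabilityMeasure μ1 := h1.1
  have : IsProbabilityMeasure μ2 := h2.1
  have f0 := m2_lt ν hν
  have f1 := m2_lt μ1 h1
  have f2 := m2_lt μ2 h2
  constructor
  · obtain ⟨γ1, hγ1⟩ := opt_exists ν μ1 f0 f1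
    obtain ⟨γ2, hγ2⟩ := opt_exists ν μ2 f0 f2
    have : IsProbabilityMeasure γ1 := hγ1.1.1
    have : IsProbabilityMeasure γ2 := hγ2.1.1
    obtain ⟨k1, hk1, e1⟩ := disintegrate ν γ1 hγ1.1.2.1
    obtain ⟨k2, hk2, e2⟩ := disintegrate ν γ2 hγ2.1.2.1
    obtain ⟨hne, -⟩ := lower ν μ1 μ2 k1 k2 f1 f2 (by rw [e1]; exact hγ1) (by rw [e2]; exact hγ2)
    obtain ⟨ρ, hρ, hmin⟩ := gamma_min ν μ1 μ2 f0 f1 f2 hne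
    have : IsProbabilityMeasure ρ := hρ.1
    obtain ⟨K, hK, e⟩ := disintegrate ν ρ (marg_of_gamma hρ).1
    have hm1 : IsMarkovKernel (K.map Prod.fst) := Kernel.IsMarkovKernel.map _ measurable_fst
    have hm2 : IsMarkovKernel (K.map Prod.snd) := Kernel.IsMarkovKernel.map _ measurable_snd
    have o1 : ν ⊗ₘ (K.map Prod.fst) ∈ OptPlan ν μ1 := by
      rw [← compProd_map12, e]; exact hρ.2.1
    have o2 : ν ⊗ₘ (K.map Prod.snd) ∈ OptPlan ν μ2 := by
      rw [← compProd_map13, e]; exact hρ.2.2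
    refine ⟨_, o1, _, o2, K.map Prod.fst, K.map Prod.snd, hm1, hm2, bind_eq _ _, bind_eq _ _, ?_⟩
    apply le_antisymm
    · exact (lower ν μ1 μ2 _ _ f1 f2 o1 o2).2
    · refine le_trans ?_ hmin
      rw [(disint_facts ν μ1 μ2 _ _ f1 f2 o1.1 o2.1).2, pivotCost_eq_s3]
      refine ENNReal.toReal_mono (eD_fin f1 f2 hρ) ?_
      have := upper ν K
      rwa [e] at this
  · intro γ1 hγ1 γ2 hγ2 κ1 κ2 hκ1 hκ2 e1 e2
    rw [bind_eq] at e1 e2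
    subst e1 e2
    exact (lower ν μ1 μ2 κ1 κ2 f1 f2 hγ1 hγ2).2

end
end

section
/- For μ1, μ2 ∈ P_2(ℝ^d), the set of Wasserstein means M(μ1, μ2) := argmin_{μ ∈ P_2(ℝ^d)} (W_2²(μ1, μ) + W_2²(μ, μ2)) equals the set of middles of Wasserstein geodesics: M(μ1, μ2) = { ((1/2)P_1 + (1/2)P_2)#γ : γ ∈ Π*(μ1, μ2) }, where P_1(x,y) = x and P_2(x,y) = y are the coordinate projections on ℝ^d × ℝ^d. -/
open MeasureTheory Filter Topology ProbabilityTheory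
open scoped ENNReal RealInnerProductSpace Classical

noncomputable section

section Helpers

variable {d : ℕ}

lemma tCost_nonneg' (π : Measure (Euc d × Euc d)) : 0 ≤ tCost π :=
  integral_nonneg fun _ => by positivity

lemma W2sq_le {μ ν : Measure (Euc d)} {π : Measure (Euc d × Euc d)} (h : π ∈ Coupling μ ν) :
    W2sq μ ν ≤ tCost π :=
  csInf_le ⟨0, by rintro _ ⟨π, -, rfl⟩; exact tCost_nonneg' π⟩ ⟨π, h, rfl⟩

lemma integrable_of_coupling {Ω : Type*} [MeasurableSpace Ω] (P : Measure Ω)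
    {f g : Ω → Euc d} (hf : Measurable f) (hg : Measurable g)
    (h1 : P.map f ∈ (P2 : Set (Measure (Euc d)))) (h2 : P.map g ∈ (P2 : Set (Measure (Euc d))))
    (a b : ℝ) : Integrable (fun p => ‖a • f p + b • g p‖ ^ 2) P := by
  have i1 : Integrable (fun p => ‖f p‖ ^ 2) P :=
    (integrable_map_measure (by fun_prop) hf.aemeasurable).1 h1.2
  have i2 : Integrable (fun p => ‖g p‖ ^ 2) P :=
    (integrable_map_measure (by fun_prop) hg.aemeasurable).1 h2.2
  refine Integrable.mono' ((i1.const_mul (2 * a ^ 2)).add (i2.const_mul (2 * b ^ 2)))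
    (by fun_prop) (Eventually.of_forall fun p => ?_)
  have := norm_add_le (a • f p) (b • g p)
  rw [norm_smul, norm_smul] at this
  simp only [Real.norm_eq_abs, abs_pow, abs_norm, Pi.add_apply] at *
  rw [← sq_abs a, ← sq_abs b]
  have h0 := norm_nonneg (a • f p + b • g p)
  nlinarith [sq_nonneg (|a| * ‖f p‖ - |b| * ‖g p‖)]

lemma integrable_sub_of_coupling {Ω : Type*} [MeasurableSpace Ω] (P : Measure Ω)
    {f g : Ω → Euc d} (hf : Measurable f) (hg : Measurable g)
    (h1 : P.map f ∈ (P2 : Set (Measure (Euc d)))) (h2 : P.map g ∈ (P2 : Set (Measure (Euc d)))) :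
    Integrable (fun p => ‖f p - g p‖ ^ 2) P := by
  have := integrable_of_coupling P hf hg h1 h2 1 (-1)
  simpa [sub_eq_add_neg] using this

lemma lsc_cost : LowerSemicontinuous (fun P : ProbabilityMeasure (Euc d × Euc d) =>
    ∫⁻ p, ENNReal.ofReal (‖p.1 - p.2‖ ^ 2) ∂(P : Measure (Euc d × Euc d))) := by
  have key : ∀ P : ProbabilityMeasure (Euc d × Euc d),
      ∫⁻ p, ENNReal.ofReal (‖p.1 - p.2‖ ^ 2) ∂(P : Measure (Euc d × Euc d))
        = ⨆ n : ℕ, ∫⁻ p, ((min (Real.toNNReal (‖p.1 - p.2‖ ^ 2)) (n : NNReal) : NNReal) : ℝ≥0∞)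
            ∂(P : Measure (Euc d × Euc d)) := by
    intro P
    rw [← lintegral_iSup]
    · refine lintegral_congr fun p => ?_
      apply le_antisymm
      · obtain ⟨n, hn⟩ := exists_nat_ge (Real.toNNReal (‖p.1 - p.2‖ ^ 2))
        refine le_iSup_of_le n ?_
        rw [min_eq_left hn]; rfl
      · refine iSup_le fun n => ?_
        exact ENNReal.coe_le_coe.2 (min_le_left _ _)
    · intro n
      fun_prop
    · intro m n hmn p
      exact ENNReal.coe_le_coe.2 (min_le_min le_rfl (by exact_mod_cast hmn))
  simp_rw [key]
  refine lowerSemicontinuous_iSup fun n => Continuous.lowerSemicontinuous ?_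
  let F : BoundedContinuousFunction (Euc d × Euc d) NNReal :=
    BoundedContinuousFunction.mkOfBound
      ⟨fun p => min (Real.toNNReal (‖p.1 - p.2‖ ^ 2)) (n : NNReal), by fun_prop⟩ (n : ℝ) (by
        intro x y
        rw [NNReal.dist_eq, abs_le]
        have hx : ((min (Real.toNNReal (‖x.1 - x.2‖ ^ 2)) (n : NNReal) : NNReal) : ℝ) ≤ n := by
          exact_mod_cast min_le_right _ _
        have hy : ((min (Real.toNNReal (‖y.1 - y.2‖ ^ 2)) (n : NNReal) : NNReal) : ℝ) ≤ n := by
          exact_mod_cast min_le_right _ _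
        have hx0 := (min (Real.toNNReal (‖x.1 - x.2‖ ^ 2)) (n : NNReal)).coe_nonneg
        have hy0 := (min (Real.toNNReal (‖y.1 - y.2‖ ^ 2)) (n : NNReal)).coe_nonneg
        simp only [ContinuousMap.coe_mk]
        constructor <;> linarith)
  rw [continuous_iff_continuousAt]
  intro P
  have hP : Tendsto (fun Q : ProbabilityMeasure (Euc d × Euc d) => Q) (𝓝 P) (𝓝 P) := tendsto_id
  exact ProbabilityMeasure.tendsto_iff_forall_lintegral_tendsto.1 hP F

lemma exists_optPlan {μ ν : Measure (Euc d)} (h1 : μ ∈ (P2 : Set (Measure (Euc d))))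
    (h2 : ν ∈ (P2 : Set (Measure (Euc d)))) : ∃ π, π ∈ OptPlan μ ν := by
  have := h1.1
  have := h2.1
  let K : Set (ProbabilityMeasure (Euc d × Euc d)) :=
    {P | (P : Measure (Euc d × Euc d)).map Prod.fst = μ ∧
      (P : Measure (Euc d × Euc d)).map Prod.snd = ν}
  have hclosed : IsClosed K := by
    let m : ProbabilityMeasure (Euc d) := ⟨μ, h1.1⟩
    let n : ProbabilityMeasure (Euc d) := ⟨ν, h2.1⟩
    have c1 := ProbabilityMeasure.continuous_map
      (continuous_fst : Continuous (Prod.fst : Euc d × Euc d → Euc d))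
    have c2 := ProbabilityMeasure.continuous_map
      (continuous_snd : Continuous (Prod.snd : Euc d × Euc d → Euc d))
    have : K = (fun P : ProbabilityMeasure (Euc d × Euc d) =>
        P.map continuous_fst.measurable.aemeasurable) ⁻¹' {m} ∩
        (fun P : ProbabilityMeasure (Euc d × Euc d) =>
        P.map continuous_snd.measurable.aemeasurable) ⁻¹' {n} := by
      ext P
      constructor
      · rintro ⟨a, b⟩
        exact ⟨Subtype.ext a, Subtype.ext b⟩
      · rintro ⟨a, b⟩
        exact ⟨congrArg Subtype.val a, congrArg Subtype.val b⟩
    rw [this]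
    exact (isClosed_singleton.preimage c1).inter (isClosed_singleton.preimage c2)
  have htight : IsTightMeasureSet
      {((P : ProbabilityMeasure (Euc d × Euc d)) : Measure (Euc d × Euc d)) | P ∈ K} := by
    rw [isTightMeasureSet_iff_exists_isCompact_measure_compl_le]
    intro ε hε
    have hε2 : 0 < ε / 2 := ENNReal.half_pos hε.ne'
    obtain ⟨K1, hK1, hμ⟩ := (isTightMeasureSet_iff_exists_isCompact_measure_compl_le.1
      (isTightMeasureSet_singleton (μ := μ))) _ hε2
    obtain ⟨K2, hK2, hν⟩ := (isTightMeasureSet_iff_exists_isCompact_measure_compl_le.1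
      (isTightMeasureSet_singleton (μ := ν))) _ hε2
    refine ⟨K1 ×ˢ K2, hK1.prod hK2, ?_⟩
    rintro _ ⟨P, ⟨hP1, hP2⟩, rfl⟩
    have hs : (K1 ×ˢ K2)ᶜ ⊆ (Prod.fst ⁻¹' K1ᶜ ∪ Prod.snd ⁻¹' K2ᶜ : Set (Euc d × Euc d)) := by
      intro p hp
      simp only [Set.mem_compl_iff, Set.mem_prod, not_and_or] at hp
      simpa using hp
    refine (measure_mono hs).trans ((measure_union_le _ _).trans ?_)
    rw [← ENNReal.add_halves ε]
    refine add_le_add ?_ ?_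
    · rw [← Measure.map_apply measurable_fst hK1.measurableSet.compl, hP1]
      exact hμ _ rfl
    · rw [← Measure.map_apply measurable_snd hK2.measurableSet.compl, hP2]
      exact hν _ rfl
  have hcomp : IsCompact K := by
    have := isCompact_closure_of_isTightMeasureSet htight
    rwa [hclosed.closure_eq] at this
  have hne : K.Nonempty := by
    refine ⟨⟨μ.prod ν, inferInstance⟩, ?_, ?_⟩
    · simp [Measure.map_fst_prod]
    · simp [Measure.map_snd_prod]
  obtain ⟨P, hP, hmin⟩ := LowerSemicontinuousOn.exists_isMinOn hne hcomp
    (lsc_cost.lowerSemicontinuousOn K)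
  have hPc : (P : Measure (Euc d × Euc d)) ∈ Coupling μ ν := ⟨inferInstance, hP.1, hP.2⟩
  refine ⟨P, hPc, le_antisymm ?_ (W2sq_le hPc)⟩
  refine le_csInf ⟨_, _, hPc, rfl⟩ ?_
  rintro _ ⟨π, hπ, rfl⟩
  have hle := hmin (a := ⟨π, hπ.1⟩) ⟨hπ.2.1, hπ.2.2⟩
  have hint : Integrable (fun p : Euc d × Euc d => ‖p.1 - p.2‖ ^ 2) π :=
    integrable_sub_of_coupling π measurable_fst measurable_snd
      (by rw [hπ.2.1]; exact h1) (by rw [hπ.2.2]; exact h2)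
  unfold tCost
  rw [integral_eq_lintegral_of_nonneg_ae (Eventually.of_forall fun _ => by positivity)
    (by fun_prop), integral_eq_lintegral_of_nonneg_ae (Eventually.of_forall fun _ => by positivity)
    (by fun_prop)]
  refine ENNReal.toReal_mono ?_ hle
  have := hint.lintegral_lt_top
  exact this.ne

lemma exists_glue_s5 {μ1 μ μ2 : Measure (Euc d)} {π1 π2 : Measure (Euc d × Euc d)}
    (h1 : π1 ∈ Coupling μ1 μ) (h2 : π2 ∈ Coupling μ μ2) :
    ∃ ρ : Measure (Euc d × Euc d × Euc d), IsProbabilityMeasure ρ ∧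
      ρ.map (fun p => (p.2.1, p.1)) = π1 ∧ ρ.map (fun p => (p.1, p.2.2)) = π2 := by
  have := h1.1
  have := h2.1
  let σ := π1.map Prod.swap
  have : IsProbabilityMeasure σ := Measure.isProbabilityMeasure_map (by fun_prop)
  have hσ : σ.fst = μ := by
    rw [Measure.fst, Measure.map_map measurable_fst measurable_swap]
    exact h1.2.2
  have hπ : π2.fst = μ := h2.2.1
  have : IsProbabilityMeasure μ := by rw [← hπ]; infer_instance
  refine ⟨μ ⊗ₘ (σ.condKernel ×ₖ π2.condKernel), inferInstance, ?_, ?_⟩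
  · have e : (fun p : Euc d × Euc d × Euc d => (p.2.1, p.1)) =
        Prod.swap ∘ Prod.map id Prod.fst := rfl
    rw [e, ← Measure.map_map (by fun_prop) (by fun_prop), ← Measure.compProd_map measurable_fst,
      ← Kernel.fst_eq, Kernel.fst_prod]
    conv_lhs => rw [← hσ, σ.disintegrate]
    rw [Measure.map_map (by fun_prop) (by fun_prop)]
    simp
  · have e : (fun p : Euc d × Euc d × Euc d => (p.1, p.2.2)) =
        Prod.map id Prod.snd := rfl
    rw [e, ← Measure.compProd_map measurable_snd, ← Kernel.snd_eq, Kernel.snd_prod]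
    conv_lhs => rw [← hπ, π2.disintegrate]

lemma para (x y z : Euc d) : ‖x - y‖ ^ 2 + ‖y - z‖ ^ 2 =
    1 / 2 * ‖x - z‖ ^ 2 + 2 * ‖y - ((1 / 2 : ℝ) • x + (1 / 2 : ℝ) • z)‖ ^ 2 := by
  have e1 : x - z = (x - y) + (y - z) := by abel
  have e2 : y - ((1 / 2 : ℝ) • x + (1 / 2 : ℝ) • z) = (1 / 2 : ℝ) • ((y - z) - (x - y)) := by
    module
  rw [e1, e2, norm_smul, mul_pow, norm_add_sq_real (x - y), norm_sub_sq_real (y - z),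
    real_inner_comm (y - z) (x - y)]
  norm_num
  ring

lemma lemA {μ1 μ μ2 : Measure (Euc d)} (h1 : μ1 ∈ (P2 : Set (Measure (Euc d))))
    (h : μ ∈ (P2 : Set (Measure (Euc d)))) (h2 : μ2 ∈ (P2 : Set (Measure (Euc d)))) :
    ∃ γ ∈ Coupling μ1 μ2, ∃ r : ℝ, 0 ≤ r ∧
      W2sq μ1 μ + W2sq μ μ2 = 1 / 2 * tCost γ + 2 * r ∧
      (r = 0 → γ.map (fun p => (1 / 2 : ℝ) • p.1 + (1 / 2 : ℝ) • p.2) = μ) := by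
  obtain ⟨π1, hπ1, c1⟩ := exists_optPlan h1 h
  obtain ⟨π2, hπ2, c2⟩ := exists_optPlan h h2
  obtain ⟨ρ, hρ, e1, e2⟩ := exists_glue_s5 hπ1 hπ2
  have m1 : ρ.map (fun p => p.2.1) = μ1 := by
    rw [← hπ1.2.1, ← e1, Measure.map_map (by fun_prop) (by fun_prop)]; rfl
  have m0 : ρ.map (fun p => p.1) = μ := by
    rw [← hπ1.2.2, ← e1, Measure.map_map (by fun_prop) (by fun_prop)]; rfl
  have m2 : ρ.map (fun p => p.2.2) = μ2 := by
    rw [← hπ2.2.2, ← e2, Measure.map_map (by fun_prop) (by fun_prop)]; rfl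
  have i1 : Integrable (fun p : Euc d × Euc d × Euc d => ‖p.2.1 - p.1‖ ^ 2) ρ :=
    integrable_sub_of_coupling ρ (by fun_prop) (by fun_prop) (m1 ▸ h1) (m0 ▸ h)
  have i2 : Integrable (fun p : Euc d × Euc d × Euc d => ‖p.1 - p.2.2‖ ^ 2) ρ :=
    integrable_sub_of_coupling ρ (by fun_prop) (by fun_prop) (m0 ▸ h) (m2 ▸ h2)
  have i3 : Integrable (fun p : Euc d × Euc d × Euc d => ‖p.2.1 - p.2.2‖ ^ 2) ρ :=
    integrable_sub_of_coupling ρ (by fun_prop) (by fun_prop) (m1 ▸ h1) (m2 ▸ h2)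
  have i4 : Integrable (fun p : Euc d × Euc d × Euc d =>
      ‖p.1 - ((1 / 2 : ℝ) • p.2.1 + (1 / 2 : ℝ) • p.2.2)‖ ^ 2) ρ := by
    have := ((i1.add i2).sub (i3.const_mul (1 / 2))).const_mul (1 / 2)
    refine this.congr (Eventually.of_forall fun p => ?_)
    have := para p.2.1 p.1 p.2.2
    simp only [Pi.add_apply, Pi.sub_apply]
    linarith
  refine ⟨ρ.map Prod.snd, ⟨Measure.isProbabilityMeasure_map (by fun_prop), ?_, ?_⟩,
    ∫ p, ‖p.1 - ((1 / 2 : ℝ) • p.2.1 + (1 / 2 : ℝ) • p.2.2)‖ ^ 2 ∂ρ,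
    integral_nonneg fun _ => by positivity, ?_, ?_⟩
  · rw [Measure.map_map (by fun_prop) (by fun_prop)]; exact m1
  · rw [Measure.map_map (by fun_prop) (by fun_prop)]; exact m2
  · rw [← c1, ← c2, ← e1, ← e2]
    unfold tCost
    rw [integral_map (by fun_prop) (by fun_prop), integral_map (by fun_prop) (by fun_prop),
      integral_map (by fun_prop) (by fun_prop), ← integral_add i1 i2, ← integral_const_mul,
      ← integral_const_mul, ← integral_add (i3.const_mul _) (i4.const_mul _)]
    exact integral_congr_ae (Eventually.of_forall fun p => para _ _ _)
  · intro hr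
    rw [integral_eq_zero_iff_of_nonneg (fun _ => by positivity) i4] at hr
    rw [Measure.map_map (by fun_prop) (by fun_prop), ← m0]
    refine Measure.map_congr ?_
    filter_upwards [hr] with p hp
    have hp' : ‖p.1 - ((1 / 2 : ℝ) • p.2.1 + (1 / 2 : ℝ) • p.2.2)‖ = 0 := by simpa using hp
    exact (sub_eq_zero.1 (norm_eq_zero.1 hp')).symm

lemma lemB {μ1 μ2 : Measure (Euc d)} (h1 : μ1 ∈ (P2 : Set (Measure (Euc d))))
    (h2 : μ2 ∈ (P2 : Set (Measure (Euc d)))) {γ : Measure (Euc d × Euc d)}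
    (hγ : γ ∈ OptPlan μ1 μ2) :
    γ.map (fun p => (1 / 2 : ℝ) • p.1 + (1 / 2 : ℝ) • p.2) ∈ (P2 : Set (Measure (Euc d))) ∧
    W2sq μ1 (γ.map (fun p => (1 / 2 : ℝ) • p.1 + (1 / 2 : ℝ) • p.2)) +
      W2sq (γ.map (fun p => (1 / 2 : ℝ) • p.1 + (1 / 2 : ℝ) • p.2)) μ2 ≤
      1 / 2 * W2sq μ1 μ2 := by
  obtain ⟨⟨hp, g1, g2⟩, hc⟩ := hγ
  refine ⟨⟨Measure.isProbabilityMeasure_map (by fun_prop), ?_⟩, ?_⟩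
  · rw [integrable_map_measure (by fun_prop) (by fun_prop)]
    exact integrable_of_coupling γ measurable_fst measurable_snd (g1 ▸ h1) (g2 ▸ h2) _ _
  · have a1 : γ.map (fun p => (p.1, (1 / 2 : ℝ) • p.1 + (1 / 2 : ℝ) • p.2)) ∈
        Coupling μ1 (γ.map (fun p => (1 / 2 : ℝ) • p.1 + (1 / 2 : ℝ) • p.2)) := by
      refine ⟨Measure.isProbabilityMeasure_map (by fun_prop), ?_, ?_⟩
      · rw [Measure.map_map (by fun_prop) (by fun_prop)]; exact g1
      · rw [Measure.map_map (by fun_prop) (by fun_prop)]; rfl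
    have a2 : γ.map (fun p => ((1 / 2 : ℝ) • p.1 + (1 / 2 : ℝ) • p.2, p.2)) ∈
        Coupling (γ.map (fun p => (1 / 2 : ℝ) • p.1 + (1 / 2 : ℝ) • p.2)) μ2 := by
      refine ⟨Measure.isProbabilityMeasure_map (by fun_prop), ?_, ?_⟩
      · rw [Measure.map_map (by fun_prop) (by fun_prop)]; rfl
      · rw [Measure.map_map (by fun_prop) (by fun_prop)]; exact g2
    have b1 : tCost (γ.map (fun p => (p.1, (1 / 2 : ℝ) • p.1 + (1 / 2 : ℝ) • p.2))) =
        1 / 4 * tCost γ := by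
      unfold tCost
      rw [integral_map (by fun_prop) (by fun_prop), ← integral_const_mul]
      refine integral_congr_ae (Eventually.of_forall fun p => ?_)
      have : p.1 - ((1 / 2 : ℝ) • p.1 + (1 / 2 : ℝ) • p.2) = (1 / 2 : ℝ) • (p.1 - p.2) := by
        module
      simp only [this, norm_smul, mul_pow]
      norm_num
    have b2 : tCost (γ.map (fun p => ((1 / 2 : ℝ) • p.1 + (1 / 2 : ℝ) • p.2, p.2))) =
        1 / 4 * tCost γ := by
      unfold tCost
      rw [integral_map (by fun_prop) (by fun_prop), ← integral_const_mul]
      refine integral_congr_ae (Eventually.of_forall fun p => ?_)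
      have : ((1 / 2 : ℝ) • p.1 + (1 / 2 : ℝ) • p.2) - p.2 = (1 / 2 : ℝ) • (p.1 - p.2) := by
        module
      simp only [this, norm_smul, mul_pow]
      norm_num
    have := W2sq_le a1
    have := W2sq_le a2
    linarith

end Helpers

/-- the Wasserstein means of `μ1, μ2` are exactly the middles
`((1/2)P₁ + (1/2)P₂)#γ` of Wasserstein geodesics, for `γ ∈ Π*(μ1, μ2)`. -/
theorem WMean_eq_geodesic_middles {d : ℕ} (μ1 μ2 : Measure (Euc d))
    (h1 : μ1 ∈ (P2 : Set (Measure (Euc d)))) (h2 : μ2 ∈ (P2 : Set (Measure (Euc d)))) :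
    WMean μ1 μ2 =
      (fun γ : Measure (Euc d × Euc d) =>
        γ.map (fun p => (1 / 2 : ℝ) • p.1 + (1 / 2 : ℝ) • p.2)) '' OptPlan μ1 μ2 := by
  ext μ
  constructor
  · rintro ⟨hμ, hmin⟩
    obtain ⟨γ0, hγ0⟩ := exists_optPlan h1 h2
    obtain ⟨hP, hle⟩ := lemB h1 h2 hγ0
    obtain ⟨γ, hγ, r, hr, heq, hz⟩ := lemA h1 hμ h2
    have a := hmin _ hP
    have b := W2sq_le hγ
    exact ⟨γ, ⟨hγ, by linarith⟩, hz (by linarith)⟩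
  · rintro ⟨γ, hγ, rfl⟩
    obtain ⟨hP, hle⟩ := lemB h1 h2 hγ
    refine ⟨hP, fun μ' hμ' => hle.trans ?_⟩
    obtain ⟨γ', hγ', r, hr, heq, -⟩ := lemA h1 hμ' h2
    have b := W2sq_le hγ'
    linarith

end
end

section
/- Let θ ∈ S^{d−1} and μ, ν ∈ P_2(ℝ^d) with ν supported on the line ℝθ. Then: (i) for any γ ∈ Π(ν, μ), ∫ ‖x−y‖² dγ(y,x) = ∫ (θ·(x−y))² dγ(y,x) + ∫ ‖Q_{θ⊥} x‖² dμ(x), where Q_{θ⊥} := Id − Q_θ; (ii) W_2²(ν, μ) = W_2²(P_θ#ν, P_θ#μ) + ∫ ‖Q_{θ⊥} x‖² dμ(x); (iii) Π*(ν, μ) = { γ ∈ Π(ν, μ) : (P_θ, P_θ)#γ = (F_{P_θ#ν}^{[-1]}, F_{P_θ#μ}^{[-1]})#L_{[0,1]} }, where L_{[0,1]} is Lebesgue measure on [0,1]. -/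
open MeasureTheory Filter Topology ProbabilityTheory
open scoped ENNReal RealInnerProductSpace Classical

noncomputable section

lemma quantile_le_iff (α : Measure ℝ) [IsProbabilityMeasure α] {t : ℝ} (h0 : 0 < t) (h1 : t < 1)
    (s : ℝ) : quantile α t ≤ s ↔ t ≤ cdf α s := by
  have hS : {s : ℝ | ENNReal.ofReal t ≤ α (Set.Iic s)} = {s | t ≤ cdf α s} := by
    ext s
    simp only [Set.mem_ofPred_eq]
    rw [← ofReal_cdf α s, ENNReal.ofReal_le_ofReal_iff (cdf_nonneg α s)]
  unfold quantile
  rw [hS]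
  have hne : {s | t ≤ cdf α s}.Nonempty := by
    obtain ⟨s, hs⟩ := ((tendsto_cdf_atTop α).eventually (lt_mem_nhds h1)).exists
    exact ⟨s, hs.le⟩
  have hbdd : BddBelow {s | t ≤ cdf α s} := by
    obtain ⟨s, hs⟩ := ((tendsto_cdf_atBot α).eventually (gt_mem_nhds h0)).exists
    refine ⟨s, fun x hx => ?_⟩
    by_contra hlt
    push Not at hlt
    have := (cdf α).mono hlt.le
    simp only [Set.mem_ofPred_eq] at hx
    linarith
  constructor
  · intro h
    refine le_trans ?_ ((cdf α).mono h)
    have hc := (cdf α).right_continuous (sInf {s | t ≤ cdf α s})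
    have hc' := (continuousWithinAt_Ioi_iff_Ici.2 hc)
    refine ge_of_tendsto hc' ?_
    filter_upwards [self_mem_nhdsWithin] with x hx
    obtain ⟨y, hy, hyx⟩ := exists_lt_of_csInf_lt hne hx
    exact le_trans hy ((cdf α).mono hyx.le)
  · intro h
    exact csInf_le hbdd h

lemma quantile_aem (α : Measure ℝ) [IsProbabilityMeasure α] :
    AEMeasurable (quantile α) (volume.restrict (Set.Ioo (0 : ℝ) 1)) := by
  refine aemeasurable_restrict_of_monotoneOn measurableSet_Ioo ?_
  intro a ha b hb hab
  rw [quantile_le_iff α ha.1 ha.2]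
  exact hab.trans ((quantile_le_iff α hb.1 hb.2 _).1 le_rfl)

/-- comonotone coupling -/
def como (α β : Measure ℝ) : Measure (ℝ × ℝ) :=
  (volume.restrict (Set.Icc (0 : ℝ) 1)).map (fun t => (quantile α t, quantile β t))

lemma como_eq (α β : Measure ℝ) :
    como α β = (volume.restrict (Set.Ioo (0 : ℝ) 1)).map
      (fun t => (quantile α t, quantile β t)) := by
  unfold como
  rw [Measure.restrict_congr_set Ioo_ae_eq_Icc]

lemma map_quantile (α : Measure ℝ) [IsProbabilityMeasure α] :
    (volume.restrict (Set.Ioo (0 : ℝ) 1)).map (quantile α) = α := by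
  have : IsFiniteMeasure (volume.restrict (Set.Ioo (0 : ℝ) 1)) := ⟨by simp⟩
  refine Measure.ext_of_Iic _ _ fun s => ?_
  rw [Measure.map_apply_of_aemeasurable (quantile_aem α) measurableSet_Iic,
    Measure.restrict_apply' measurableSet_Ioo, ← ofReal_cdf α s]
  have : quantile α ⁻¹' Set.Iic s ∩ Set.Ioo 0 1 = Set.Iic (cdf α s) ∩ Set.Ioo 0 1 := by
    ext t
    simp only [Set.mem_inter_iff, Set.mem_preimage, Set.mem_Iic, Set.mem_Ioo]
    constructor
    · rintro ⟨h, h2⟩; exact ⟨(quantile_le_iff α h2.1 h2.2 s).1 h, h2⟩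
    · rintro ⟨h, h2⟩; exact ⟨(quantile_le_iff α h2.1 h2.2 s).2 h, h2⟩
  rw [this, ← Measure.restrict_apply' measurableSet_Ioo, Measure.restrict_congr_set Ioo_ae_eq_Ioc,
    Measure.restrict_apply' measurableSet_Ioc, Set.Iic_inter_Ioc_of_le (cdf_le_one α s)]
  simp

instance como_prob (α β : Measure ℝ) [IsProbabilityMeasure α] [IsProbabilityMeasure β] :
    IsProbabilityMeasure (como α β) := by
  have : IsProbabilityMeasure (volume.restrict (Set.Ioo (0 : ℝ) 1)) := ⟨by simp⟩
  rw [como_eq]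
  exact Measure.isProbabilityMeasure_map ((quantile_aem α).prodMk (quantile_aem β))

lemma como_mem (α β : Measure ℝ) [IsProbabilityMeasure α] [IsProbabilityMeasure β] :
    como α β ∈ Coupling α β := by
  refine ⟨inferInstance, ?_, ?_⟩
  · rw [como_eq, AEMeasurable.map_map_of_aemeasurable measurable_fst.aemeasurable
      ((quantile_aem α).prodMk (quantile_aem β))]
    exact map_quantile α
  · rw [como_eq, AEMeasurable.map_map_of_aemeasurable measurable_snd.aemeasurable
      ((quantile_aem α).prodMk (quantile_aem β))]
    exact map_quantile β

lemma como_apply1 (α β : Measure ℝ) [IsProbabilityMeasure α] [IsProbabilityMeasure β] (u v : ℝ) :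
    como α β (Set.Iic u ×ˢ Set.Ioi v) ≤ α (Set.Iic u) - β (Set.Iic v) := by
  rw [como_eq, Measure.map_apply_of_aemeasurable ((quantile_aem α).prodMk (quantile_aem β))
    (measurableSet_Iic.prod measurableSet_Ioi), Measure.restrict_apply' measurableSet_Ioo,
    ← ofReal_cdf α, ← ofReal_cdf β, ← ENNReal.ofReal_sub _ (cdf_nonneg β v), ← Real.volume_Ioc]
  refine measure_mono ?_
  rintro t ⟨⟨h1, h2⟩, h3⟩
  simp only [Set.mem_Iic, Set.mem_Ioi] at h1 h2
  rw [quantile_le_iff α h3.1 h3.2] at h1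
  rw [← not_le, quantile_le_iff β h3.1 h3.2, not_le] at h2
  exact ⟨h2, h1⟩

lemma como_apply2 (α β : Measure ℝ) [IsProbabilityMeasure α] [IsProbabilityMeasure β] (u v : ℝ) :
    como α β (Set.Ioi v ×ˢ Set.Iic u) ≤ β (Set.Iic u) - α (Set.Iic v) := by
  rw [como_eq, Measure.map_apply_of_aemeasurable ((quantile_aem α).prodMk (quantile_aem β))
    (measurableSet_Ioi.prod measurableSet_Iic), Measure.restrict_apply' measurableSet_Ioo,
    ← ofReal_cdf α, ← ofReal_cdf β, ← ENNReal.ofReal_sub _ (cdf_nonneg α v), ← Real.volume_Ioc]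
  refine measure_mono ?_
  rintro t ⟨⟨h2, h1⟩, h3⟩
  simp only [Set.mem_Iic, Set.mem_Ioi] at h1 h2
  rw [quantile_le_iff β h3.1 h3.2] at h1
  rw [← not_le, quantile_le_iff α h3.1 h3.2, not_le] at h2
  exact ⟨h2, h1⟩

lemma coup_apply1 {α β : Measure ℝ} {π : Measure (ℝ × ℝ)} (h : π ∈ Coupling α β) (u v : ℝ) :
    α (Set.Iic u) - β (Set.Iic v) ≤ π (Set.Iic u ×ˢ Set.Ioi v) := by
  obtain ⟨_, rfl, rfl⟩ := h
  rw [Measure.map_apply measurable_fst measurableSet_Iic,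
    Measure.map_apply measurable_snd measurableSet_Iic, tsub_le_iff_right]
  refine le_trans (measure_mono ?_) (measure_union_le _ _)
  rintro ⟨x, y⟩ hx
  rcases le_or_gt y v with hy | hy
  · right; exact hy
  · left; exact ⟨hx, hy⟩

lemma coup_apply2 {α β : Measure ℝ} {π : Measure (ℝ × ℝ)} (h : π ∈ Coupling α β) (u v : ℝ) :
    β (Set.Iic u) - α (Set.Iic v) ≤ π (Set.Ioi v ×ˢ Set.Iic u) := by
  obtain ⟨_, rfl, rfl⟩ := h
  rw [Measure.map_apply measurable_fst measurableSet_Iic,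
    Measure.map_apply measurable_snd measurableSet_Iic, tsub_le_iff_right]
  refine le_trans (measure_mono ?_) (measure_union_le _ _)
  rintro ⟨x, y⟩ hy
  rcases le_or_gt x v with hx | hx
  · right; exact hx
  · left; exact ⟨hx, hy⟩

lemma coup_rect1 {α β : Measure ℝ} {π : Measure (ℝ × ℝ)} (h : π ∈ Coupling α β) (a b : ℝ) :
    π (Set.Iic a ×ˢ Set.Iic b) = α (Set.Iic a) - π (Set.Iic a ×ˢ Set.Ioi b) := by
  obtain ⟨_, rfl, rfl⟩ := h
  rw [Measure.map_apply measurable_fst measurableSet_Iic]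
  refine ENNReal.eq_sub_of_add_eq (measure_ne_top _ _) ?_
  rw [← measure_union _ (measurableSet_Iic.prod measurableSet_Ioi)]
  · congr 1
    ext ⟨x, y⟩
    have := le_or_gt y b
    simp; tauto
  · rw [Set.disjoint_left]
    rintro ⟨x, y⟩ ⟨_, h1⟩ ⟨_, h2⟩
    exact absurd (Set.mem_Ioi.1 h2) (not_lt.2 (Set.mem_Iic.1 h1))

lemma coup_rect2 {α β : Measure ℝ} {π : Measure (ℝ × ℝ)} (h : π ∈ Coupling α β) (a b : ℝ) :
    π (Set.Iic a ×ˢ Set.Iic b) = β (Set.Iic b) - π (Set.Ioi a ×ˢ Set.Iic b) := by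
  obtain ⟨_, rfl, rfl⟩ := h
  rw [Measure.map_apply measurable_snd measurableSet_Iic]
  refine ENNReal.eq_sub_of_add_eq (measure_ne_top _ _) ?_
  rw [← measure_union _ (measurableSet_Ioi.prod measurableSet_Iic)]
  · congr 1
    ext ⟨x, y⟩
    have := le_or_gt x a
    simp; tauto
  · rw [Set.disjoint_left]
    rintro ⟨x, y⟩ ⟨h1, _⟩ ⟨h2, _⟩
    exact absurd (Set.mem_Ioi.1 h2) (not_lt.2 (Set.mem_Iic.1 h1))

/-- layer function -/
def lay (π : Measure (ℝ × ℝ)) (q : ℝ × ℝ) : ℝ≥0∞ :=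
  π (Set.Iic (min q.1 q.2) ×ˢ Set.Ioi (max q.1 q.2)) +
    π (Set.Ioi (max q.1 q.2) ×ˢ Set.Iic (min q.1 q.2))

lemma lay_meas_set1 : MeasurableSet {z : (ℝ × ℝ) × (ℝ × ℝ) |
    z.2.1 ≤ min z.1.1 z.1.2 ∧ max z.1.1 z.1.2 < z.2.2} := by
  have h1 : MeasurableSet {z : (ℝ × ℝ) × (ℝ × ℝ) | z.2.1 ≤ min z.1.1 z.1.2} :=
    measurableSet_le (by fun_prop) (by fun_prop)
  have h2 : MeasurableSet {z : (ℝ × ℝ) × (ℝ × ℝ) | max z.1.1 z.1.2 < z.2.2} :=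
    measurableSet_lt (by fun_prop) (by fun_prop)
  convert h1.inter h2 using 1
  ext z; simp

lemma lay_meas_set2 : MeasurableSet {z : (ℝ × ℝ) × (ℝ × ℝ) |
    max z.1.1 z.1.2 < z.2.1 ∧ z.2.2 ≤ min z.1.1 z.1.2} := by
  have h1 : MeasurableSet {z : (ℝ × ℝ) × (ℝ × ℝ) | max z.1.1 z.1.2 < z.2.1} :=
    measurableSet_lt (by fun_prop) (by fun_prop)
  have h2 : MeasurableSet {z : (ℝ × ℝ) × (ℝ × ℝ) | z.2.2 ≤ min z.1.1 z.1.2} :=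
    measurableSet_le (by fun_prop) (by fun_prop)
  convert h1.inter h2 using 1
  ext z; simp

lemma lay_measurable (π : Measure (ℝ × ℝ)) [SFinite π] : Measurable (lay π) :=
  (measurable_measure_prodMk_left lay_meas_set1).add
    (measurable_measure_prodMk_left lay_meas_set2)

lemma sq_sub_eq (x y : ℝ) : ENNReal.ofReal ((x - y) ^ 2) =
    (volume : Measure (ℝ × ℝ)) (Set.Ico x y ×ˢ Set.Ico x y) +
    (volume : Measure (ℝ × ℝ)) (Set.Ico y x ×ˢ Set.Ico y x) := by
  rw [Measure.volume_eq_prod, Measure.prod_prod, Measure.prod_prod, Real.volume_Ico, Real.volume_Ico]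
  rcases le_total x y with h | h
  · rw [ENNReal.ofReal_of_nonpos (sub_nonpos.2 h), ← ENNReal.ofReal_mul (by linarith)]
    simp; congr 1; ring
  · rw [ENNReal.ofReal_of_nonpos (sub_nonpos.2 h), ← ENNReal.ofReal_mul (by linarith)]
    simp; congr 1; ring

lemma lint_cost (π : Measure (ℝ × ℝ)) [SFinite π] :
    ∫⁻ p, ENNReal.ofReal ((p.1 - p.2) ^ 2) ∂π = ∫⁻ q, lay π q := by
  have e1 := Measure.prod_apply (μ := (volume : Measure (ℝ × ℝ))) (ν := π) lay_meas_set1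
  have e2 := Measure.prod_apply (μ := (volume : Measure (ℝ × ℝ))) (ν := π) lay_meas_set2
  have f1 := Measure.prod_apply_symm (μ := (volume : Measure (ℝ × ℝ))) (ν := π) lay_meas_set1
  have f2 := Measure.prod_apply_symm (μ := (volume : Measure (ℝ × ℝ))) (ν := π) lay_meas_set2
  have hl : ∫⁻ q, lay π q = _ := lintegral_add_left
    (measurable_measure_prodMk_left (ν := π) lay_meas_set1) (fun q => π (Prod.mk q ⁻¹' {z : (ℝ × ℝ) × (ℝ × ℝ) |
    max z.1.1 z.1.2 < z.2.1 ∧ z.2.2 ≤ min z.1.1 z.1.2}))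
  rw [hl, ← e1, ← e2, f1, f2, ← lintegral_add_left
    (measurable_measure_prodMk_right lay_meas_set1)]
  refine lintegral_congr fun p => ?_
  rw [sq_sub_eq]
  congr 2
  · ext q
    simp; tauto
  · ext q
    simp; tauto

lemma como_lay_le {α β : Measure ℝ} [IsProbabilityMeasure α] [IsProbabilityMeasure β]
    {π : Measure (ℝ × ℝ)} (h : π ∈ Coupling α β) (q : ℝ × ℝ) : lay (como α β) q ≤ lay π q :=
  add_le_add ((como_apply1 _ _ _ _).trans (coup_apply1 h _ _))
    ((como_apply2 _ _ _ _).trans (coup_apply2 h _ _))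

lemma como_unique {α β : Measure ℝ} [IsProbabilityMeasure α] [IsProbabilityMeasure β]
    {π : Measure (ℝ × ℝ)} (h : π ∈ Coupling α β)
    (hfin : ∫⁻ p, ENNReal.ofReal ((p.1 - p.2) ^ 2) ∂(como α β) ≠ ∞)
    (hle : ∫⁻ p, ENNReal.ofReal ((p.1 - p.2) ^ 2) ∂π ≤
      ∫⁻ p, ENNReal.ofReal ((p.1 - p.2) ^ 2) ∂(como α β)) : π = como α β := by
  have := h.1
  rw [lint_cost] at hfin hle
  rw [lint_cost] at hle
  have hae := ae_eq_of_ae_le_of_lintegral_le (Eventually.of_forall (como_lay_le h)) hfin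
    (lay_measurable π).aemeasurable hle
  have hae2 : ∀ᵐ q : ℝ × ℝ, π (Set.Iic q.1 ×ˢ Set.Iic q.2) = como α β (Set.Iic q.1 ×ˢ Set.Iic q.2) := by
    filter_upwards [hae] with q hq
    have g1 := (como_apply1 α β (min q.1 q.2) (max q.1 q.2)).trans (coup_apply1 h _ _)
    have g2 := (como_apply2 α β (min q.1 q.2) (max q.1 q.2)).trans (coup_apply2 h _ _)
    unfold lay at hq
    have k1 : π (Set.Iic (min q.1 q.2) ×ˢ Set.Ioi (max q.1 q.2)) =
        como α β (Set.Iic (min q.1 q.2) ×ˢ Set.Ioi (max q.1 q.2)) := by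
      refine le_antisymm ?_ g1
      by_contra hlt
      push Not at hlt
      exact absurd hq (ne_of_lt (ENNReal.add_lt_add_of_lt_of_le (measure_ne_top _ _) hlt g2))
    have k2 : π (Set.Ioi (max q.1 q.2) ×ˢ Set.Iic (min q.1 q.2)) =
        como α β (Set.Ioi (max q.1 q.2) ×ˢ Set.Iic (min q.1 q.2)) := by
      refine le_antisymm ?_ g2
      by_contra hlt
      push Not at hlt
      exact absurd hq (ne_of_lt (ENNReal.add_lt_add_of_le_of_lt (measure_ne_top _ _) g1 hlt))
    rcases le_total q.1 q.2 with hq' | hq'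
    · rw [min_eq_left hq', max_eq_right hq'] at k1
      rw [coup_rect1 h, coup_rect1 (como_mem α β), k1]
    · rw [min_eq_right hq', max_eq_left hq'] at k2
      rw [coup_rect2 h, coup_rect2 (como_mem α β), k2]
  have hrect : ∀ a b : ℝ, π (Set.Iic a ×ˢ Set.Iic b) = como α β (Set.Iic a ×ˢ Set.Iic b) := by
    intro a b
    refine le_antisymm ?_ ?_
    · rw [coup_rect1 h, coup_rect1 (como_mem α β)]
      exact tsub_le_tsub_left ((como_apply1 _ _ _ _).trans (coup_apply1 h _ _)) _
    · have hI : Set.Iic a ×ˢ Set.Iic b =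
          ⋂ n : ℕ, Set.Iic (a + 1 / ((n : ℝ) + 1)) ×ˢ Set.Iic (b + 1 / ((n : ℝ) + 1)) := by
        ext ⟨x, y⟩
        simp only [Set.mem_prod, Set.mem_Iic, Set.mem_iInter]
        constructor
        · rintro ⟨h1, h2⟩ n
          have : 0 < 1 / ((n : ℝ) + 1) := Nat.one_div_pos_of_nat
          constructor <;> linarith
        · intro H
          have ht := tendsto_one_div_add_atTop_nhds_zero_nat (𝕜 := ℝ)
          constructor
          · have := ht.const_add a
            rw [add_zero] at this
            exact ge_of_tendsto' this fun n => (H n).1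
          · have := ht.const_add b
            rw [add_zero] at this
            exact ge_of_tendsto' this fun n => (H n).2
      have ht := tendsto_measure_iInter_atTop (μ := π)
        (s := fun n : ℕ => Set.Iic (a + 1 / ((n : ℝ) + 1)) ×ˢ Set.Iic (b + 1 / ((n : ℝ) + 1)))
        (fun n => (measurableSet_Iic.prod measurableSet_Iic).nullMeasurableSet)
        (by
          intro m n hmn
          have : 1 / ((n : ℝ) + 1) ≤ 1 / ((m : ℝ) + 1) := Nat.one_div_le_one_div hmn
          exact Set.prod_mono (Set.Iic_subset_Iic.2 (by linarith))
            (Set.Iic_subset_Iic.2 (by linarith)))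
        ⟨0, measure_ne_top _ _⟩
      rw [← hI] at ht
      refine ge_of_tendsto' ht fun n => ?_
      have hpos : 0 < 1 / ((n : ℝ) + 1) := Nat.one_div_pos_of_nat
      have hv : (volume : Measure (ℝ × ℝ)) (Set.Ioo a (a + 1 / ((n : ℝ) + 1)) ×ˢ
          Set.Ioo b (b + 1 / ((n : ℝ) + 1))) ≠ 0 := by
        rw [Measure.volume_eq_prod, Measure.prod_prod, Real.volume_Ioo, Real.volume_Ioo]
        simp only [add_sub_cancel_left]
        exact mul_ne_zero (by simpa using hpos) (by simpa using hpos)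
      obtain ⟨q, hq, hq2⟩ := (frequently_ae_mem_iff.2 hv).and_eventually hae2 |>.exists
      simp only [Set.mem_prod, Set.mem_Ioo] at hq
      calc como α β (Set.Iic a ×ˢ Set.Iic b) ≤ como α β (Set.Iic q.1 ×ˢ Set.Iic q.2) :=
            measure_mono (Set.prod_mono (Set.Iic_subset_Iic.2 hq.1.1.le)
              (Set.Iic_subset_Iic.2 hq.2.1.le))
        _ = π (Set.Iic q.1 ×ˢ Set.Iic q.2) := hq2.symm
        _ ≤ _ := measure_mono (Set.prod_mono (Set.Iic_subset_Iic.2 hq.1.2.le)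
              (Set.Iic_subset_Iic.2 hq.2.2.le))
  have hb : (borel ℝ) = MeasurableSpace.generateFrom (Set.range Set.Iic) := borel_eq_generateFrom_Iic ℝ
  have hg : (inferInstance : MeasurableSpace ℝ) = MeasurableSpace.generateFrom (Set.range Set.Iic) := by
    rw [← hb]; exact BorelSpace.measurable_eq
  have hspan : IsCountablySpanning (Set.range (Set.Iic : ℝ → Set ℝ)) :=
    ⟨fun n : ℕ => Set.Iic (n : ℝ), fun n => ⟨_, rfl⟩, by
      ext x; simpa using exists_nat_ge x⟩
  refine ext_of_generate_finite (Set.image2 (· ×ˢ ·) (Set.range Set.Iic) (Set.range Set.Iic))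
    (generateFrom_eq_prod hg.symm hg.symm hspan hspan).symm
    (isPiSystem_Iic.prod isPiSystem_Iic) ?_ (by simp)
  rintro _ ⟨_, ⟨a, rfl⟩, _, ⟨b, rfl⟩, rfl⟩
  exact hrect a b

lemma coup_integrable {E : Type*} [NormedAddCommGroup E] [MeasurableSpace E] [BorelSpace E]
    [SecondCountableTopology E] {α β : Measure E} (hα : Integrable (fun x => ‖x‖ ^ 2) α)
    (hβ : Integrable (fun x => ‖x‖ ^ 2) β) {π : Measure (E × E)} (h : π ∈ Coupling α β) :
    Integrable (fun p => ‖p.1 - p.2‖ ^ 2) π := by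
  obtain ⟨_, rfl, rfl⟩ := h
  have h1 : Integrable (fun p : E × E => ‖p.1‖ ^ 2) π := hα.comp_measurable measurable_fst
  have h2 : Integrable (fun p : E × E => ‖p.2‖ ^ 2) π := hβ.comp_measurable measurable_snd
  refine ((h1.const_mul 2).add (h2.const_mul 2)).mono' (by fun_prop) (Eventually.of_forall ?_)
  intro p
  have h3 := norm_sub_le p.1 p.2
  have h4 := norm_nonneg (p.1 - p.2)
  simp only [Pi.add_apply]
  rw [Real.norm_of_nonneg (by positivity)]
  nlinarith [sq_nonneg (‖p.1‖ - ‖p.2‖)]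

lemma tCost_real {α β : Measure ℝ} (hα : Integrable (fun x => ‖x‖ ^ 2) α)
    (hβ : Integrable (fun x => ‖x‖ ^ 2) β) {π : Measure (ℝ × ℝ)} (h : π ∈ Coupling α β) :
    ∫⁻ p, ENNReal.ofReal ((p.1 - p.2) ^ 2) ∂π = ENNReal.ofReal (tCost π) := by
  unfold tCost
  rw [ofReal_integral_eq_lintegral_ofReal (coup_integrable hα hβ h)
    (Eventually.of_forall fun p => by positivity)]
  simp

lemma tCost_nonneg {E : Type*} [NormedAddCommGroup E] [MeasurableSpace E]
    (π : Measure (E × E)) : 0 ≤ tCost π := integral_nonneg fun p => by positivity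

lemma como_le {α β : Measure ℝ} [IsProbabilityMeasure α] [IsProbabilityMeasure β]
    (hα : Integrable (fun x => ‖x‖ ^ 2) α)
    (hβ : Integrable (fun x => ‖x‖ ^ 2) β) {π : Measure (ℝ × ℝ)} (h : π ∈ Coupling α β) :
    tCost (como α β) ≤ tCost π := by
  have := h.1
  rw [← ENNReal.ofReal_le_ofReal_iff (tCost_nonneg _), ← tCost_real hα hβ h,
    ← tCost_real hα hβ (como_mem α β), lint_cost, lint_cost]
  exact lintegral_mono (como_lay_le h)

lemma como_eq_of_cost {α β : Measure ℝ} [IsProbabilityMeasure α] [IsProbabilityMeasure β]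
    (hα : Integrable (fun x => ‖x‖ ^ 2) α)
    (hβ : Integrable (fun x => ‖x‖ ^ 2) β) {π : Measure (ℝ × ℝ)} (h : π ∈ Coupling α β)
    (hc : tCost π = tCost (como α β)) : π = como α β := by
  refine como_unique h ?_ ?_
  · rw [tCost_real hα hβ (como_mem α β)]; exact ENNReal.ofReal_ne_top
  · rw [tCost_real hα hβ (como_mem α β), tCost_real hα hβ h, hc]

lemma W2sq_eq_of_min {E : Type*} [NormedAddCommGroup E] [MeasurableSpace E]
    {α β : Measure E} {κ : Measure (E × E)} (hκ : κ ∈ Coupling α β)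
    (hmin : ∀ π ∈ Coupling α β, tCost κ ≤ tCost π) : W2sq α β = tCost κ := by
  refine IsLeast.csInf_eq ⟨⟨κ, hκ, rfl⟩, ?_⟩
  rintro _ ⟨π, hπ, rfl⟩
  exact hmin π hπ

lemma map_compProd_comap {X : Type*} [MeasurableSpace X] (μ : Measure X) [IsProbabilityMeasure μ]
    (f : X → ℝ) (hf : Measurable f) (K : Kernel ℝ ℝ) [IsMarkovKernel K] :
    (μ ⊗ₘ (K.comap f hf)).map (fun p => (f p.1, p.2)) = (μ.map f) ⊗ₘ K := by
  have : IsProbabilityMeasure (μ.map f) := Measure.isProbabilityMeasure_map hf.aemeasurable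
  ext s hs
  have hm : Measurable (fun p : X × ℝ => (f p.1, p.2)) := by fun_prop
  rw [Measure.map_apply hm hs, Measure.compProd_apply (hm hs), Measure.compProd_apply hs,
    lintegral_map (Kernel.measurable_kernel_prodMk_left hs) hf]
  rfl

lemma lift_coupling {d : ℕ} (θ : Euc d) (hθ : ‖θ‖ = 1) (μ ν : Measure (Euc d))
    [IsProbabilityMeasure μ] (hline : ∀ᵐ y ∂ν, y = ⟪θ, y⟫ • θ)
    {κ : Measure (ℝ × ℝ)} (hκ : κ ∈ Coupling (projLine θ ν) (projLine θ μ)) :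
    ∃ γ ∈ Coupling ν μ, γ.map (fun p => (⟪θ, p.1⟫, ⟪θ, p.2⟫)) = κ := by
  obtain ⟨hp, hκ1, hκ2⟩ := hκ
  have hf : Measurable (fun x : Euc d => (⟪θ, x⟫ : ℝ)) := by fun_prop
  have hθθ : (⟪θ, θ⟫ : ℝ) = 1 := by rw [real_inner_self_eq_norm_sq, hθ]; norm_num
  set κ' : Measure (ℝ × ℝ) := κ.map Prod.swap with hκ'
  have : IsProbabilityMeasure κ' := Measure.isProbabilityMeasure_map measurable_swap.aemeasurable
  have hfst : κ'.fst = μ.map (fun x => ⟪θ, x⟫) := by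
    rw [Measure.fst, hκ', Measure.map_map measurable_fst measurable_swap]
    exact hκ2
  have hg : Measurable (fun p : Euc d × ℝ => (p.2 • θ, p.1)) := by fun_prop
  set ρ := μ ⊗ₘ (κ'.condKernel.comap _ hf) with hρ
  have hmap : ρ.map (fun p => (⟪θ, p.1⟫, p.2)) = κ' := by
    rw [hρ, map_compProd_comap, ← hfst]
    exact κ'.disintegrate _
  have hback : κ'.map Prod.swap = κ := by
    rw [hκ', Measure.map_map measurable_swap measurable_swap]
    simp
  have hsnd : ρ.map (fun p => (p.2, ⟪θ, p.1⟫)) = κ := by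
    rw [← hback, ← hmap, Measure.map_map measurable_swap (by fun_prop)]
    rfl
  refine ⟨ρ.map (fun p => (p.2 • θ, p.1)), ⟨Measure.isProbabilityMeasure_map hg.aemeasurable,
    ?_, ?_⟩, ?_⟩
  · rw [Measure.map_map measurable_fst hg]
    have h1 : (Prod.fst ∘ fun p : Euc d × ℝ => (p.2 • θ, p.1)) =
      (fun r : ℝ => r • θ) ∘ Prod.fst ∘ (fun p : Euc d × ℝ => (p.2, (⟪θ, p.1⟫ : ℝ))) := rfl
    rw [h1, ← Measure.map_map (by fun_prop) (by fun_prop),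
      ← Measure.map_map (by fun_prop) (by fun_prop), hsnd, hκ1, projLine,
      Measure.map_map (by fun_prop) hf]
    calc _ = ν.map id := by
          refine Measure.map_congr ?_
          filter_upwards [hline] with y hy
          exact hy.symm
      _ = ν := Measure.map_id
  · rw [Measure.map_map measurable_snd hg]
    exact Measure.fst_compProd μ _
  · rw [Measure.map_map (by fun_prop) hg, ← hsnd]
    congr 1
    ext p
    · simp [Function.comp, inner_smul_right, hθ]
    · rfl

/-- optimal transport from a measure `ν` supported on the line `ℝθ`:
cost splitting, value of `W₂²`, and characterisation of optimal plans. -/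
theorem semi_1D_ot {d : ℕ} (θ : Euc d) (hθ : ‖θ‖ = 1) (μ ν : Measure (Euc d))
    (hμ : μ ∈ (P2 : Set (Measure (Euc d)))) (hν : ν ∈ (P2 : Set (Measure (Euc d))))
    (hsupp : ν (Set.range fun r : ℝ => r • θ)ᶜ = 0) :
    (∀ γ ∈ Coupling ν μ,
      (∫ p, ‖p.1 - p.2‖ ^ 2 ∂γ)
        = (∫ p, (⟪θ, p.2 - p.1⟫) ^ 2 ∂γ) + ∫ x, ‖x - ⟪θ, x⟫ • θ‖ ^ 2 ∂μ) ∧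
    W2sq ν μ = W2sq (projLine θ ν) (projLine θ μ) + ∫ x, ‖x - ⟪θ, x⟫ • θ‖ ^ 2 ∂μ ∧
    OptPlan ν μ =
      {γ | γ ∈ Coupling ν μ ∧
        γ.map (fun p => (⟪θ, p.1⟫, ⟪θ, p.2⟫)) = piTheta θ ν μ} := by
  obtain ⟨hμp, hμ2⟩ := hμ
  obtain ⟨hνp, hν2⟩ := hν
  have hθθ : (⟪θ, θ⟫ : ℝ) = 1 := by rw [real_inner_self_eq_norm_sq, hθ]; norm_num
  have hf : Measurable (fun x : Euc d => (⟪θ, x⟫ : ℝ)) := by fun_prop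
  have hin : ∀ x : Euc d, (⟪θ, x⟫ : ℝ) ^ 2 ≤ ‖x‖ ^ 2 := by
    intro x
    have := abs_real_inner_le_norm θ x
    rw [hθ, one_mul] at this
    rw [← sq_abs]
    gcongr
  have hdec : ∀ x : Euc d, ‖x - (⟪θ, x⟫ : ℝ) • θ‖ ^ 2 = ‖x‖ ^ 2 - (⟪θ, x⟫ : ℝ) ^ 2 := by
    intro x
    rw [norm_sub_sq_real, norm_smul, inner_smul_right, hθ, real_inner_comm, mul_one,
      Real.norm_eq_abs, sq_abs]
    ring
  have hline : ∀ᵐ y ∂ν, y = (⟪θ, y⟫ : ℝ) • θ := by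
    have h0 : ∀ᵐ y ∂ν, y ∈ Set.range fun r : ℝ => r • θ := mem_ae_iff.2 hsupp
    filter_upwards [h0] with y hy
    obtain ⟨r, rfl⟩ := hy
    simp [inner_smul_right, hθ]
  have hint : ∀ m : Measure (Euc d), Integrable (fun x => ‖x‖ ^ 2) m →
      Integrable (fun x => (⟪θ, x⟫ : ℝ) ^ 2) m := by
    intro m hm
    refine hm.mono' (by fun_prop) (Eventually.of_forall fun x => ?_)
    rw [Real.norm_of_nonneg (by positivity)]
    exact hin x
  have hproj : ∀ m : Measure (Euc d), Integrable (fun x => ‖x‖ ^ 2) m →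
      Integrable (fun r : ℝ => ‖r‖ ^ 2) (projLine θ m) := by
    intro m hm
    unfold projLine
    rw [integrable_map_measure (by fun_prop) hf.aemeasurable]
    have := hint m hm
    simpa [Function.comp_def] using this
  have hαp : IsProbabilityMeasure (projLine θ ν) :=
    Measure.isProbabilityMeasure_map hf.aemeasurable
  have hβp : IsProbabilityMeasure (projLine θ μ) :=
    Measure.isProbabilityMeasure_map hf.aemeasurable
  have hα := hproj ν hν2
  have hβ := hproj μ hμ2
  have hpp : Measurable (fun p : Euc d × Euc d => ((⟪θ, p.1⟫ : ℝ), (⟪θ, p.2⟫ : ℝ))) := by fun_prop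
  have hcp : ∀ γ ∈ Coupling ν μ, γ.map (fun p => (⟪θ, p.1⟫, ⟪θ, p.2⟫)) ∈
      Coupling (projLine θ ν) (projLine θ μ) := by
    rintro γ ⟨hγ, h1, h2⟩
    refine ⟨Measure.isProbabilityMeasure_map hpp.aemeasurable, ?_, ?_⟩
    · rw [Measure.map_map measurable_fst hpp, projLine, ← h1, Measure.map_map hf measurable_fst]
      rfl
    · rw [Measure.map_map measurable_snd hpp, projLine, ← h2, Measure.map_map hf measurable_snd]
      rfl
  have hcost : ∀ γ : Measure (Euc d × Euc d),
      tCost (γ.map (fun p => ((⟪θ, p.1⟫ : ℝ), (⟪θ, p.2⟫ : ℝ)))) =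
        ∫ p, (⟪θ, p.2 - p.1⟫ : ℝ) ^ 2 ∂γ := by
    intro γ
    unfold tCost
    rw [integral_map hpp.aemeasurable (by fun_prop)]
    refine integral_congr_ae (Eventually.of_forall fun p => ?_)
    simp only [inner_sub_right, Real.norm_eq_abs, sq_abs]
    ring
  have hi : ∀ γ ∈ Coupling ν μ,
      (∫ p, ‖p.1 - p.2‖ ^ 2 ∂γ)
        = (∫ p, (⟪θ, p.2 - p.1⟫ : ℝ) ^ 2 ∂γ) + ∫ x, ‖x - (⟪θ, x⟫ : ℝ) • θ‖ ^ 2 ∂μ := by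
    intro γ hγ
    have hγI := coup_integrable hν2 hμ2 hγ
    obtain ⟨_, h1, h2⟩ := hγ
    have hq : Integrable (fun x => ‖x - (⟪θ, x⟫ : ℝ) • θ‖ ^ 2) μ := by
      simp_rw [hdec]
      exact hμ2.sub (hint μ hμ2)
    rw [← h2] at hq
    have hq' : Integrable (fun p : Euc d × Euc d => ‖p.2 - (⟪θ, p.2⟫ : ℝ) • θ‖ ^ 2) γ :=
      hq.comp_measurable measurable_snd
    have hp' : Integrable (fun p : Euc d × Euc d => (⟪θ, p.2 - p.1⟫ : ℝ) ^ 2) γ := by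
      refine hγI.mono' (by fun_prop) (Eventually.of_forall fun p => ?_)
      rw [Real.norm_of_nonneg (by positivity), norm_sub_rev]
      exact hin _
    have hmap : ∫ x, ‖x - (⟪θ, x⟫ : ℝ) • θ‖ ^ 2 ∂μ =
        ∫ p, ‖p.2 - (⟪θ, p.2⟫ : ℝ) • θ‖ ^ 2 ∂γ := by
      rw [← h2, integral_map measurable_snd.aemeasurable (by fun_prop)]
    rw [hmap, ← integral_add hp' hq']
    refine integral_congr_ae ?_
    rw [← h1] at hline
    have hl := ae_of_ae_map measurable_fst.aemeasurable hline
    filter_upwards [hl] with p hp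
    rw [norm_sub_rev]
    have e := hdec (p.2 - p.1)
    have e2 : p.2 - p.1 - (⟪θ, p.2 - p.1⟫ : ℝ) • θ = p.2 - (⟪θ, p.2⟫ : ℝ) • θ := by
      rw [inner_sub_right, sub_smul, ← hp]
      abel
    rw [e2] at e
    linarith
  have hi' : ∀ γ ∈ Coupling ν μ, tCost γ =
      tCost (γ.map (fun p => ((⟪θ, p.1⟫ : ℝ), (⟪θ, p.2⟫ : ℝ)))) +
        ∫ x, ‖x - (⟪θ, x⟫ : ℝ) • θ‖ ^ 2 ∂μ := by
    intro γ hγ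
    rw [hcost]
    exact hi γ hγ
  have hpi : piTheta θ ν μ = como (projLine θ ν) (projLine θ μ) := rfl
  obtain ⟨γ₀, hγ₀, hγ₀m⟩ := lift_coupling θ hθ μ ν hline
    (como_mem (projLine θ ν) (projLine θ μ))
  have hW1 : W2sq (projLine θ ν) (projLine θ μ) = tCost (como (projLine θ ν) (projLine θ μ)) :=
    W2sq_eq_of_min (como_mem _ _) fun π hπ => como_le hα hβ hπ
  have hW : W2sq ν μ = tCost γ₀ := by
    refine W2sq_eq_of_min hγ₀ fun γ hγ => ?_
    rw [hi' γ hγ, hi' γ₀ hγ₀, hγ₀m]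
    have := como_le hα hβ (hcp γ hγ)
    linarith
  have hW2 : W2sq ν μ = W2sq (projLine θ ν) (projLine θ μ) +
      ∫ x, ‖x - (⟪θ, x⟫ : ℝ) • θ‖ ^ 2 ∂μ := by
    rw [hW, hi' γ₀ hγ₀, hγ₀m, hW1]
  refine ⟨hi, hW2, ?_⟩
  ext γ
  constructor
  · rintro ⟨hγ, hc⟩
    refine ⟨hγ, ?_⟩
    rw [hi' γ hγ, hW2, hW1] at hc
    rw [hpi]
    exact como_eq_of_cost hα hβ (hcp γ hγ) (by linarith)
  · rintro ⟨hγ, hc⟩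
    refine ⟨hγ, ?_⟩
    rw [hi' γ hγ, hc, hW2, hW1, hpi]

end
end
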